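/- arXiv:1202.4327 — 2 statements merged into one kernel-verified Lean document; each statement's English description precedes it below -/
import Mathlib

section
/- Let f_{2/3} be the Mittag-Leffler density of index 2/3. Then for every x ≥ 0: ∫₀^∞ e^{-t}·t^{-2/3}·f_{2/3}(t^{-2/3}·x) dt = e^{-x}. -/
open Real MeasureTheory Set Filter Topology

noncomputable section

/-- The Mittag-Leffler density of index `2/3`, defined by its entire power series. -/
def mittagLeffler23 (x : ℝ) : ℝ :=
  (1 / π) * ∑' k : ℕ,
    (Real.sin (2 * π * ((k : ℝ) + 1) / 3) * Real.Gamma (2 * ((k : ℝ) + 1) / 3) /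
      (Nat.factorial k : ℝ)) * (-x) ^ k

/-!
Write `K_x(s) = s^(α-1) exp(-x s^α)` and let `π / 2 < θ < π`. Expanding `exp(-x s^α)` and using
`∫ e^s s^(a-1) ds = e^(iπa) Γ(a)` on the ray of argument `θ` gives the Laplace inversion formula
`t^(-α) f_α(t^(-α) x) = (1/π) Im ∫ e^(ts) K_x(s) ds` on that ray. Integrating against `e^(-t)`
turns the left-hand side of the theorem into `(1/π) Im ∫ K_x(s) / (1 - s) ds`. If moreover
`θ α ≤ π / 2`, then `K_x(s) = O(|s|^(α-1))` for `0 ≤ arg s ≤ θ`. The pole of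
`(K_x(s) - e^(-x) K_0(s)) / (1 - s)` at `s = 1` is removable, so its ray may be rotated onto the
positive axis, where the function is real. Hence the left-hand side at `x` is `e^(-x)` times its
value at `0`, which is `1` by Euler's reflection formula.
-/

section RayIntegral

/-- The point at distance `r` from the origin on the ray of argument `θ`. -/
def ray (θ r : ℝ) : ℂ := r * Complex.exp (θ * Complex.I)

/-- The integral of `g` along the ray of argument `θ`, oriented away from the origin. -/
def rayIntegral (θ : ℝ) (g : ℂ → ℂ) : ℂ :=
  Complex.exp (θ * Complex.I) * ∫ r in Ioi (0 : ℝ), g (ray θ r)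

/-- The closed sector between the rays of arguments `θ₁` and `θ₂`, in either order, without its
apex. -/
def sector (θ₁ θ₂ : ℝ) : Set ℂ := {s | s ≠ 0 ∧ s.arg ∈ uIcc θ₁ θ₂}

variable {θ θ₁ θ₂ r p q : ℝ} {g h : ℂ → ℂ}

@[fun_prop]
lemma continuous_ray (θ : ℝ) : Continuous (ray θ) := by
  unfold ray
  fun_prop

lemma norm_ray (hr : 0 ≤ r) : ‖ray θ r‖ = r := by
  rw [ray, norm_mul, Complex.norm_exp_ofReal_mul_I, mul_one, Complex.norm_of_nonneg hr]

lemma ray_re (θ r : ℝ) : (ray θ r).re = r * Real.cos θ := by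
  rw [ray, Complex.re_ofReal_mul, Complex.exp_ofReal_mul_I_re]

lemma ray_zero_left (r : ℝ) : ray 0 r = r := by simp [ray]

lemma ray_mul (θ t r : ℝ) : ray θ (t * r) = t * ray θ r := by
  simp only [ray, Complex.ofReal_mul, mul_assoc]

lemma ray_exp (θ x : ℝ) : ray θ (Real.exp x) = Complex.exp (x + θ * Complex.I) := by
  rw [ray, Complex.exp_add, Complex.ofReal_exp]

lemma ray_ne_zero (hr : 0 < r) : ray θ r ≠ 0 := by
  rw [← norm_ne_zero_iff, norm_ray hr.le]
  exact hr.ne'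

lemma arg_ray (hθ : θ ∈ Ioc (-π) π) (hr : 0 < r) : (ray θ r).arg = θ := by
  rw [ray, Complex.arg_real_mul _ hr, Complex.arg_exp_mul_I]
  exact (toIocMod_eq_self two_pi_pos).2 ⟨hθ.1, by linarith [hθ.2]⟩

lemma ofReal_mul_cpow (hr : 0 < r) {s : ℂ} (hs : s ≠ 0) (a : ℂ) :
    (r * s) ^ a = (r : ℂ) ^ a * s ^ a := by
  have hr' : (r : ℂ) ≠ 0 := mod_cast hr.ne'
  rw [Complex.cpow_def_of_ne_zero (mul_ne_zero hr' hs), Complex.log_ofReal_mul hr hs,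
    Complex.ofReal_log hr.le, add_mul, Complex.exp_add, Complex.cpow_def_of_ne_zero hr',
    Complex.cpow_def_of_ne_zero hs]

lemma ray_cpow (hθ : θ ∈ Ioc (-π) π) (hr : 0 < r) (a : ℂ) :
    ray θ r ^ a = (r : ℂ) ^ a * Complex.exp (θ * a * Complex.I) := by
  rw [ray, ofReal_mul_cpow hr (Complex.exp_ne_zero _), Complex.cpow_def_of_ne_zero
    (Complex.exp_ne_zero _), Complex.log_exp (by simpa using hθ.1) (by simpa using hθ.2),
    mul_right_comm]

lemma ray_mem_sector (hθ : θ ∈ Ioc (-π) π) (hmem : θ ∈ uIcc θ₁ θ₂) (hr : 0 < r) :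
    ray θ r ∈ sector θ₁ θ₂ :=
  ⟨ray_ne_zero hr, by rwa [arg_ray hθ hr]⟩

lemma tendsto_ray_zero (hθ : θ ∈ Ioc (-π) π) (hmem : θ ∈ uIcc θ₁ θ₂) :
    Tendsto (ray θ) (𝓝[>] 0) (𝓝[sector θ₁ θ₂] 0) := by
  refine tendsto_nhdsWithin_iff.2 ⟨?_, eventually_mem_nhdsWithin.mono
    fun r hr => ray_mem_sector hθ hmem hr⟩
  exact ((continuous_ray θ).tendsto' 0 0 (by simp [ray])).mono_left nhdsWithin_le_nhds

lemma tendsto_ray_cobounded (hθ : θ ∈ Ioc (-π) π) (hmem : θ ∈ uIcc θ₁ θ₂) :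
    Tendsto (ray θ) atTop (Bornology.cobounded ℂ ⊓ 𝓟 (sector θ₁ θ₂)) := by
  refine tendsto_inf.2 ⟨?_, tendsto_principal.2 ((eventually_gt_atTop 0).mono
    fun r hr => ray_mem_sector hθ hmem hr)⟩
  rw [← tendsto_norm_atTop_iff_cobounded]
  exact tendsto_id.congr' ((eventually_ge_atTop 0).mono fun r hr => (norm_ray hr).symm)

lemma zero_notMem_sector (θ₁ θ₂ : ℝ) : (0 : ℂ) ∉ sector θ₁ θ₂ := fun h => h.1 rfl

lemma sector_self_subset (θ₁ θ₂ : ℝ) : sector θ₁ θ₁ ⊆ sector θ₁ θ₂ := fun _ hs =>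
  ⟨hs.1, uIcc_subset_uIcc left_mem_uIcc left_mem_uIcc hs.2⟩

lemma ne_one_of_mem_sector_self (hθ : θ ≠ 0) {s : ℂ} (hs : s ∈ sector θ θ) : s ≠ 1 := by
  rintro rfl
  simpa [hθ.symm] using hs.2

lemma sector_subset_slitPlane (h₁ : θ₁ ∈ Ioo (-π) π) (h₂ : θ₂ ∈ Ioo (-π) π) :
    sector θ₁ θ₂ ⊆ Complex.slitPlane := fun _ hs =>
  Complex.mem_slitPlane_iff_arg.2
    ⟨(((convex_Ioo (-π) π).ordConnected.uIcc_subset h₁ h₂) hs.2).2.ne, hs.1⟩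

lemma rayIntegral_congr (hgh : ∀ r, 0 < r → g (ray θ r) = h (ray θ r)) :
    rayIntegral θ g = rayIntegral θ h := by
  unfold rayIntegral
  rw [setIntegral_congr_fun measurableSet_Ioi hgh]

lemma rayIntegral_const_mul (θ : ℝ) (c : ℂ) (g : ℂ → ℂ) :
    rayIntegral θ (fun s => c * g s) = c * rayIntegral θ g := by
  rw [rayIntegral, rayIntegral, integral_const_mul, mul_left_comm]

lemma rayIntegral_sub (hg : IntegrableOn (fun r => g (ray θ r)) (Ioi 0))
    (hh : IntegrableOn (fun r => h (ray θ r)) (Ioi 0)) :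
    rayIntegral θ (fun s => g s - h s) = rayIntegral θ g - rayIntegral θ h := by
  rw [rayIntegral, integral_sub hg hh, mul_sub, rayIntegral, rayIntegral]

lemma rayIntegral_comp_mul_left (θ : ℝ) (g : ℂ → ℂ) {t : ℝ} (ht : 0 < t) :
    rayIntegral θ (fun s => g (t * s)) = (t : ℂ)⁻¹ * rayIntegral θ g := by
  have hscale := integral_comp_mul_left_Ioi (fun r => g (ray θ r)) 0 ht
  simp only [ray_mul, mul_zero, Complex.real_smul, Complex.ofReal_inv] at hscale
  rw [rayIntegral, hscale, mul_left_comm, rayIntegral]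

lemma integrableOn_ray (hθ : θ ∈ Ioc (-π) π) (hmem : θ ∈ uIcc θ₁ θ₂)
    (hg : ContinuousOn g (sector θ₁ θ₂))
    (hp : p < 1) (h0 : g =O[𝓝[sector θ₁ θ₂] 0] fun s => ‖s‖ ^ (-p))
    (hq : 1 < q) (htop : g =O[Bornology.cobounded ℂ ⊓ 𝓟 (sector θ₁ θ₂)] fun s => ‖s‖ ^ (-q)) :
    IntegrableOn (fun r => g (ray θ r)) (Ioi 0) := by
  have hcont : ContinuousOn (fun r => g (ray θ r)) (Ioi 0) :=
    hg.comp (continuous_ray θ).continuousOn fun r hr => ray_mem_sector hθ hmem hr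
  have htop' : (fun r => g (ray θ r)) =O[atTop] fun r : ℝ => r ^ (-q) :=
    (htop.comp_tendsto (tendsto_ray_cobounded hθ hmem)).congr' .rfl
      ((eventually_ge_atTop 0).mono fun r hr => by simp only [Function.comp_apply, norm_ray hr])
  have h0' : (fun r => g (ray θ r)) =O[𝓝[>] 0] fun r : ℝ => r ^ (-p) :=
    (h0.comp_tendsto (tendsto_ray_zero hθ hmem)).congr' .rfl
      (eventually_mem_nhdsWithin.mono fun r hr => by
        simp only [Function.comp_apply, norm_ray (le_of_lt hr)])
  simpa [MellinConvergent] using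
    mellinConvergent_of_isBigO_rpow (s := 1) (hcont.locallyIntegrableOn measurableSet_Ioi)
      htop' (by simpa using hq) h0' (by simpa using hp)

end RayIntegral

section Rotation

variable {θ θ₁ θ₂ p q b : ℝ} {g : ℂ → ℂ}

lemma integral_Ioi_eq_integral_exp (f : ℝ → ℂ) :
    ∫ r in Ioi 0, f r = ∫ x, Real.exp x • f (Real.exp x) := by
  rw [← Real.range_exp, ← image_univ, integral_image_eq_integral_abs_deriv_smul .univ
    (fun x _ => (Real.hasDerivAt_exp x).hasDerivWithinAt) Real.exp_injective.injOn]
  simp only [Real.abs_exp, setIntegral_univ]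

lemma integrableOn_Ioi_iff_integrable_exp (f : ℝ → ℂ) :
    IntegrableOn f (Ioi 0) ↔ Integrable fun x => Real.exp x • f (Real.exp x) := by
  rw [← Real.range_exp, ← image_univ, integrableOn_image_iff_integrableOn_abs_deriv_smul .univ
    (fun x _ => (Real.hasDerivAt_exp x).hasDerivWithinAt) Real.exp_injective.injOn]
  simp only [Real.abs_exp, integrableOn_univ]

/-- The integrand of `∫ g(s) ds` in the logarithmic coordinate `s = exp z`, in which sectors become
horizontal strips and rays become horizontal lines. -/
def logIntegrand (g : ℂ → ℂ) (z : ℂ) : ℂ := Complex.exp z * g (Complex.exp z)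

/-- The integral of `g(s) / i` along the arc of radius `exp x` from argument `θ₁` to `θ₂`, that is
along a vertical segment in the logarithmic coordinate. -/
def arcIntegral (θ₁ θ₂ : ℝ) (g : ℂ → ℂ) (x : ℝ) : ℂ :=
  ∫ y in θ₁..θ₂, logIntegrand g (x + y * Complex.I)

lemma logIntegrand_line (g : ℂ → ℂ) (θ x : ℝ) :
    logIntegrand g (x + θ * Complex.I) =
      Complex.exp (θ * Complex.I) * (Real.exp x • g (ray θ (Real.exp x))) := by
  rw [logIntegrand, ← ray_exp, ray, Complex.real_smul]
  ring

lemma rayIntegral_eq_integral_logIntegrand (θ : ℝ) (g : ℂ → ℂ) :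
    rayIntegral θ g = ∫ x : ℝ, logIntegrand g (x + θ * Complex.I) := by
  simp only [rayIntegral, integral_Ioi_eq_integral_exp, logIntegrand_line, integral_const_mul]

lemma tendsto_integral_logIntegrand (hg : IntegrableOn (fun r => g (ray θ r)) (Ioi 0)) :
    Tendsto (fun R : ℝ => ∫ x in (-R)..R, logIntegrand g (x + θ * Complex.I)) atTop
      (𝓝 (rayIntegral θ g)) := by
  rw [rayIntegral_eq_integral_logIntegrand]
  refine intervalIntegral_tendsto_integral ?_ tendsto_neg_atTop_atBot tendsto_id
  simp only [logIntegrand_line]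
  exact ((integrableOn_Ioi_iff_integrable_exp _).1 hg).const_mul _

lemma exp_mem_sector (h₁ : θ₁ ∈ Ioc (-π) π) (h₂ : θ₂ ∈ Ioc (-π) π) {z : ℂ}
    (hz : z.im ∈ uIcc θ₁ θ₂) : Complex.exp z ∈ sector θ₁ θ₂ := by
  have hray : ray z.im (Real.exp z.re) = Complex.exp z := by rw [ray_exp, Complex.re_add_im]
  rw [← hray]
  exact ray_mem_sector ((convex_Ioc (-π) π).ordConnected.uIcc_subset h₁ h₂ hz) hz (Real.exp_pos _)

lemma isBigO_arcIntegral (h₁ : θ₁ ∈ Ioc (-π) π) (h₂ : θ₂ ∈ Ioc (-π) π) {L : Filter ℝ}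
    (hg : g =O[comap norm L ⊓ 𝓟 (sector θ₁ θ₂)] fun s => ‖s‖ ^ (-b)) :
    arcIntegral θ₁ θ₂ g =O[comap Real.exp L]
      fun x => Real.exp ((1 - b) * x) := by
  obtain ⟨M, hM⟩ := hg.bound
  rw [eventually_inf_principal, eventually_comap] at hM
  refine .of_bound (M * |θ₂ - θ₁|) ?_
  filter_upwards [tendsto_comap.eventually hM] with x hx
  rw [Real.norm_of_nonneg (Real.exp_nonneg _), mul_right_comm]
  refine intervalIntegral.norm_integral_le_of_norm_le_const fun y hy => ?_
  have hnorm : ‖Complex.exp (x + y * Complex.I)‖ = Real.exp x := by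
    simp [Complex.norm_exp]
  have hbound := hx _ hnorm
    (exp_mem_sector h₁ h₂ (by simpa using uIoc_subset_uIcc hy))
  rw [hnorm, Real.norm_of_nonneg (by positivity), ← Real.exp_mul] at hbound
  calc ‖logIntegrand g (x + y * Complex.I)‖
      = Real.exp x * ‖g (Complex.exp (x + y * Complex.I))‖ := by rw [logIntegrand, norm_mul, hnorm]
    _ ≤ Real.exp x * (M * Real.exp (x * -b)) := by gcongr
    _ = M * Real.exp ((1 - b) * x) := by
      rw [mul_left_comm, ← Real.exp_add]
      ring_nf

lemma tendsto_arcIntegral_atBot (h₁ : θ₁ ∈ Ioc (-π) π) (h₂ : θ₂ ∈ Ioc (-π) π)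
    (hp : p < 1) (h0 : g =O[𝓝[sector θ₁ θ₂] 0] fun s => ‖s‖ ^ (-p)) :
    Tendsto (arcIntegral θ₁ θ₂ g) atBot (𝓝 0) := by
  have hfilter : 𝓝[sector θ₁ θ₂] (0 : ℂ) = comap norm (𝓝[>] 0) ⊓ 𝓟 (sector θ₁ θ₂) := by
    rw [comap_norm_nhdsGT_zero, ← nhdsWithin_inter', inter_eq_self_of_subset_right fun s hs => hs.1]
  rw [hfilter] at h0
  have hbig := isBigO_arcIntegral h₁ h₂ h0
  rw [Real.comap_exp_nhdsGT_zero] at hbig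
  exact hbig.trans_tendsto
    (Real.tendsto_exp_atBot.comp (tendsto_id.const_mul_atBot (sub_pos.2 hp)))

lemma tendsto_arcIntegral_atTop (h₁ : θ₁ ∈ Ioc (-π) π) (h₂ : θ₂ ∈ Ioc (-π) π)
    (hq : 1 < q) (htop : g =O[Bornology.cobounded ℂ ⊓ 𝓟 (sector θ₁ θ₂)] fun s => ‖s‖ ^ (-q)) :
    Tendsto (arcIntegral θ₁ θ₂ g) atTop (𝓝 0) := by
  rw [← comap_norm_atTop] at htop
  have hbig := isBigO_arcIntegral h₁ h₂ htop
  rw [Real.comap_exp_atTop] at hbig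
  exact hbig.trans_tendsto
    (Real.tendsto_exp_atBot.comp (tendsto_id.const_mul_atTop_of_neg (sub_neg.2 hq)))

theorem rayIntegral_eq_of_differentiableOn (h₁ : θ₁ ∈ Ioc (-π) π) (h₂ : θ₂ ∈ Ioc (-π) π)
    (hg : DifferentiableOn ℂ g (sector θ₁ θ₂))
    (hp : p < 1) (h0 : g =O[𝓝[sector θ₁ θ₂] 0] fun s => ‖s‖ ^ (-p))
    (hq : 1 < q) (htop : g =O[Bornology.cobounded ℂ ⊓ 𝓟 (sector θ₁ θ₂)] fun s => ‖s‖ ^ (-q)) :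
    rayIntegral θ₁ g = rayIntegral θ₂ g := by
  have hint₁ := integrableOn_ray h₁ left_mem_uIcc hg.continuousOn hp h0 hq htop
  have hint₂ := integrableOn_ray h₂ right_mem_uIcc hg.continuousOn hp h0 hq htop
  have hright := tendsto_arcIntegral_atTop h₁ h₂ hq htop
  have hleft := (tendsto_arcIntegral_atBot h₁ h₂ hp h0).comp tendsto_neg_atTop_atBot
  have hlim := (((tendsto_integral_logIntegrand hint₁).sub
    (tendsto_integral_logIntegrand hint₂)).add (hright.const_mul Complex.I)).sub
    (hleft.const_mul Complex.I)
  have hrect (R : ℝ) := Complex.integral_boundary_rect_eq_zero_of_differentiableOn (logIntegrand g)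
    (-R + θ₁ * Complex.I) (R + θ₂ * Complex.I) <|
      Complex.differentiable_exp.differentiableOn.mul <|
        hg.comp Complex.differentiable_exp.differentiableOn fun z hz =>
          exp_mem_sector h₁ h₂ (by simpa using hz.2)
  have hzero := tendsto_nhds_unique hlim (tendsto_const_nhds.congr fun R => by
    simpa [arcIntegral] using (hrect R).symm)
  rwa [mul_zero, add_zero, sub_zero, sub_eq_zero] at hzero

end Rotation

section Hankel

variable {θ a : ℝ}

lemma norm_mul_cos_le_re (hθ : |θ| ≤ π) {s : ℂ} (hs : s ∈ sector θ 0) :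
    ‖s‖ * Real.cos θ ≤ s.re := by
  rw [← Complex.norm_mul_cos_arg, ← Real.cos_abs θ, ← Real.cos_abs s.arg]
  gcongr
  refine Real.cos_le_cos_of_nonneg_of_le_pi (abs_nonneg _) hθ ?_
  simpa using abs_sub_right_of_mem_uIcc hs.2

lemma isBigO_exp_neg_mul_cpow_zero (θ a : ℝ) :
    (fun s : ℂ => Complex.exp (-s) * s ^ ((a - 1 : ℝ) : ℂ)) =O[𝓝[sector θ 0] 0]
      fun s => ‖s‖ ^ (-(1 - a)) := by
  have hexp : Tendsto (fun s : ℂ => Complex.exp (-s)) (𝓝[sector θ 0] 0) (𝓝 1) :=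
    (Continuous.tendsto' (by fun_prop) 0 1 (by simp)).mono_left nhdsWithin_le_nhds
  refine ((hexp.isBigO_one ℝ).mul (.of_norm_left ?_)).congr_right fun s => one_mul _
  simp only [Complex.norm_cpow_real, neg_sub]
  exact Asymptotics.isBigO_refl _ _

lemma isBigO_exp_neg_mul_cpow_cobounded (hθ : |θ| < π / 2) (a b : ℝ) :
    (fun s : ℂ => Complex.exp (-s) * s ^ ((a - 1 : ℝ) : ℂ))
      =O[Bornology.cobounded ℂ ⊓ 𝓟 (sector θ 0)] fun s => ‖s‖ ^ b := by
  have hcos : 0 < Real.cos θ := Real.cos_pos_of_mem_Ioo (abs_lt.1 hθ)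
  have hdecay : (fun s : ℂ => Real.exp (-Real.cos θ * ‖s‖))
      =O[Bornology.cobounded ℂ ⊓ 𝓟 (sector θ 0)] fun s => ‖s‖ ^ (b - (a - 1)) :=
    (isLittleO_exp_neg_mul_rpow_atTop hcos _).isBigO.comp_tendsto
      (tendsto_norm_cobounded_atTop.mono_left inf_le_left)
  have hexp : (fun s : ℂ => Complex.exp (-s)) =O[Bornology.cobounded ℂ ⊓ 𝓟 (sector θ 0)]
      fun s : ℂ => Real.exp (-Real.cos θ * ‖s‖) := by
    refine .of_bound' (eventually_inf_principal.2 (.of_forall fun s hs => ?_))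
    have hre := norm_mul_cos_le_re (hθ.le.trans (by linarith [pi_pos])) hs
    rw [Complex.norm_exp, Real.norm_of_nonneg (Real.exp_nonneg _), Complex.neg_re]
    exact Real.exp_le_exp.2 (by linarith)
  refine ((hexp.trans hdecay).mul (g₂ := fun s : ℂ => ‖s‖ ^ (a - 1)) 
    (.of_norm_left ?_)).congr' .rfl ?_
  · simp only [Complex.norm_cpow_real]
    exact Asymptotics.isBigO_refl _ _
  · refine eventually_inf_principal.2 (.of_forall fun s hs => ?_)
    simp only [← Real.rpow_add (norm_pos_iff.2 hs.1), sub_add_cancel]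

lemma rayIntegral_exp_neg_mul_cpow (hθ : |θ| < π / 2) (ha : 0 < a) :
    rayIntegral θ (fun s => Complex.exp (-s) * s ^ ((a - 1 : ℝ) : ℂ)) = Real.Gamma a := by
  have hθ' : θ ∈ Ioo (-π) π := abs_lt.1 (hθ.trans (by linarith [pi_pos]))
  have h0' : (0 : ℝ) ∈ Ioo (-π) π := ⟨by linarith [pi_pos], pi_pos⟩
  have hdiff : DifferentiableOn ℂ (fun s : ℂ => Complex.exp (-s) * s ^ ((a - 1 : ℝ) : ℂ))
      (sector θ 0) := fun s hs =>
    ((Complex.differentiable_exp.comp differentiable_neg).differentiableAt.mul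
      (differentiableAt_id.cpow_const
        (sector_subset_slitPlane hθ' h0' hs))).differentiableWithinAt
  rw [rayIntegral_eq_of_differentiableOn (Ioo_subset_Ioc_self hθ') (Ioo_subset_Ioc_self h0') hdiff
    (by linarith) (isBigO_exp_neg_mul_cpow_zero θ a) one_lt_two
    (isBigO_exp_neg_mul_cpow_cobounded hθ a _), ← Complex.Gamma_ofReal,
    Complex.Gamma_eq_integral (by simpa using ha), Complex.GammaIntegral]
  simp [rayIntegral, ray_zero_left]

lemma ray_sub_pi (θ r : ℝ) : ray (θ - π) r = -ray θ r := by
  rw [ray, ray, Complex.ofReal_sub, sub_mul, Complex.exp_sub_pi_mul_I, mul_neg]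

lemma rayIntegral_eq_neg (θ : ℝ) (g : ℂ → ℂ) :
    rayIntegral θ g = -rayIntegral (θ - π) fun s => g (-s) := by
  have hphase : Complex.exp ((θ - π : ℝ) * Complex.I) = -Complex.exp (θ * Complex.I) := by
    rw [Complex.ofReal_sub, sub_mul, Complex.exp_sub_pi_mul_I]
  simp only [rayIntegral, ray_sub_pi, hphase, neg_neg, neg_mul]

lemma neg_ray_sub_pi_cpow (hθ : θ ∈ Ioc 0 π) {r : ℝ} (hr : 0 < r) (a : ℂ) :
    (-ray (θ - π) r) ^ a = Complex.exp (π * a * Complex.I) * ray (θ - π) r ^ a := by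
  have hneg : -ray (θ - π) r = ray θ r := by rw [ray_sub_pi, neg_neg]
  rw [hneg, ray_cpow ⟨by linarith [hθ.1, pi_pos], hθ.2⟩ hr,
    ray_cpow ⟨by linarith [hθ.1], by linarith [hθ.2, pi_pos]⟩ hr, mul_left_comm, ← Complex.exp_add]
  push_cast
  ring_nf

lemma rayIntegral_exp_mul_cpow (hθ : θ ∈ Ioo (π / 2) π) (ha : 0 < a) :
    rayIntegral θ (fun s => Complex.exp s * s ^ ((a - 1 : ℝ) : ℂ)) =
      Complex.exp (π * a * Complex.I) * Real.Gamma a := by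
  have hθ' : |θ - π| < π / 2 := abs_lt.2 ⟨by linarith [hθ.1], by linarith [hθ.2, pi_pos]⟩
  have hphase : Complex.exp (π * (a - 1 : ℝ) * Complex.I) = -Complex.exp (π * a * Complex.I) := by
    rw [← Complex.exp_sub_pi_mul_I]
    push_cast
    ring_nf
  rw [rayIntegral_eq_neg, rayIntegral_congr (h := fun s => Complex.exp (π * (a - 1 : ℝ) * Complex.I)
      * (Complex.exp (-s) * s ^ ((a - 1 : ℝ) : ℂ))) fun r hr => ?_,
    rayIntegral_const_mul, rayIntegral_exp_neg_mul_cpow hθ' ha, hphase, neg_mul, neg_neg]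
  rw [neg_ray_sub_pi_cpow ⟨by linarith [hθ.1, pi_pos], hθ.2.le⟩ hr, mul_left_comm]

end Hankel

section LaplaceInversion

variable {α x θ : ℝ}

/-- The density on `[0, ∞)` of the Mittag-Leffler distribution of index `α ∈ (0, 1)`, whose Laplace
transform is the Mittag-Leffler function `E_α(-y)`, extended to `ℝ` by its power series. -/
def mittagLefflerDensity (α x : ℝ) : ℝ :=
  (1 / π) * ∑' k : ℕ,
    Real.sin (π * (α * (k + 1))) * Real.Gamma (α * (k + 1)) / k.factorial * (-x) ^ k

/-- For `0 < α < 1` and `0 ≤ x`, the Laplace transform `s^(α - 1) exp(-x s^α)` of the function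
`t ↦ t^(-α) f_α(t^(-α) x)`, where `f_α` is `mittagLefflerDensity α`. Here `s^α` is the principal
branch. -/
def stableKernel (α x : ℝ) (s : ℂ) : ℂ :=
  s ^ ((α - 1 : ℝ) : ℂ) * Complex.exp (-(x * s ^ (α : ℂ)))

lemma mul_rpow_le_mul_add (hα : α ∈ Ioo 0 1) {b M u : ℝ} (hb : 0 < b) (hM : 0 ≤ M) (hu : 0 ≤ u) :
    M * u ^ α ≤ α * (b * u) + (1 - α) * (M / b ^ α) ^ (1 - α)⁻¹ := by
  have hα' : 0 < 1 - α := sub_pos.2 hα.2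
  have hyoung := Real.geom_mean_le_arith_mean2_weighted hα.1.le hα'.le (mul_nonneg hb.le hu)
    (show 0 ≤ (M / b ^ α) ^ (1 - α)⁻¹ by positivity) (by ring)
  rw [Real.rpow_inv_rpow (by positivity) hα'.ne', Real.mul_rpow hb.le hu] at hyoung
  calc M * u ^ α = b ^ α * u ^ α * (M / b ^ α) := by field_simp
    _ ≤ _ := hyoung

lemma integrableOn_rpow_mul_exp_mul_rpow_sub (hα : α ∈ Ioo 0 1) {b M : ℝ} (hb : 0 < b)
    (hM : 0 ≤ M) :
    IntegrableOn (fun u : ℝ => u ^ (α - 1) * Real.exp (M * u ^ α - b * u)) (Ioi 0) := by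
  set C := (1 - α) * (M / b ^ α) ^ (1 - α)⁻¹
  have hdom := (integrableOn_rpow_mul_exp_neg_mul_rpow (s := α - 1) (by linarith [hα.1]) one_pos
    (mul_pos (sub_pos.2 hα.2) hb)).mul_const (Real.exp C)
  refine hdom.mono' (by fun_prop) ((ae_restrict_mem measurableSet_Ioi).mono fun u hu => ?_)
  have hu' : 0 ≤ u := le_of_lt hu
  rw [Real.norm_of_nonneg (by positivity), Real.rpow_one, mul_assoc, ← Real.exp_add]
  gcongr
  linarith [mul_rpow_le_mul_add hα hb hM hu']

/-- The `k`-th term of the expansion of `exp s * stableKernel α x s` in powers of `x`. -/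
def stableKernelTerm (α x : ℝ) (k : ℕ) (s : ℂ) : ℂ :=
  Complex.exp s * s ^ ((α - 1 : ℝ) : ℂ) * ((-(x * s ^ (α : ℂ))) ^ k / k.factorial)

lemma hasSum_stableKernelTerm (α x : ℝ) (s : ℂ) :
    HasSum (fun k => stableKernelTerm α x k s) (Complex.exp s * stableKernel α x s) := by
  have hexp := NormedSpace.expSeries_div_hasSum_exp (-(x * s ^ (α : ℂ)))
  rw [← Complex.exp_eq_exp_ℂ] at hexp
  rw [stableKernel, ← mul_assoc]
  exact hexp.mul_left _

lemma hasSum_norm_stableKernelTerm {r : ℝ} (hr : 0 ≤ r) :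
    HasSum (fun k => ‖stableKernelTerm α x k (ray θ r)‖)
      (r ^ (α - 1) * Real.exp (|x| * r ^ α - -Real.cos θ * r)) := by
  have hnorm (k : ℕ) : ‖stableKernelTerm α x k (ray θ r)‖ =
      Real.exp (r * Real.cos θ) * r ^ (α - 1) * ((|x| * r ^ α) ^ k / k.factorial) := by
    simp only [stableKernelTerm, norm_mul, norm_div, norm_pow, norm_neg, Complex.norm_exp, ray_re,
      Complex.norm_cpow_real, norm_ray hr, Complex.norm_real, Real.norm_eq_abs,
      Complex.norm_natCast]
  have hvalue : r ^ (α - 1) * Real.exp (|x| * r ^ α - -Real.cos θ * r) =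
      Real.exp (r * Real.cos θ) * r ^ (α - 1) * Real.exp (|x| * r ^ α) := by
    rw [mul_right_comm, ← Real.exp_add, mul_comm]
    ring_nf
  have hexp := NormedSpace.expSeries_div_hasSum_exp (|x| * r ^ α)
  rw [← Real.exp_eq_exp_ℝ] at hexp
  simp only [hnorm, hvalue]
  exact hexp.mul_left _

lemma stableKernelTerm_of_ne_zero {s : ℂ} (hs : s ≠ 0) (α x : ℝ) (k : ℕ) :
    stableKernelTerm α x k s =
      ((-x) ^ k / k.factorial : ℂ) * (Complex.exp s * s ^ ((α * (k + 1) - 1 : ℝ) : ℂ)) := by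
  have hexponent : ((α * (k + 1) - 1 : ℝ) : ℂ) = (α - 1 : ℝ) + k * (α : ℂ) := by
    push_cast
    ring
  rw [stableKernelTerm, hexponent, Complex.cpow_add _ _ hs, Complex.cpow_nat_mul, ← neg_mul,
    mul_pow]
  ring

lemma rayIntegral_stableKernelTerm (hα : 0 < α) (hθ : θ ∈ Ioo (π / 2) π) (x : ℝ) (k : ℕ) :
    rayIntegral θ (stableKernelTerm α x k) =
      ((Real.Gamma (α * (k + 1)) / k.factorial * (-x) ^ k : ℝ) : ℂ) *
        Complex.exp ((π * (α * (k + 1)) : ℝ) * Complex.I) := by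
  calc rayIntegral θ (stableKernelTerm α x k)
      = rayIntegral θ fun s =>
          ((-x) ^ k / k.factorial : ℂ) * (Complex.exp s * s ^ ((α * (k + 1) - 1 : ℝ) : ℂ)) :=
        rayIntegral_congr fun r hr => stableKernelTerm_of_ne_zero (ray_ne_zero hr) α x k
    _ = _ := by
      rw [rayIntegral_const_mul, rayIntegral_exp_mul_cpow hθ (by positivity)]
      push_cast
      ring

lemma hasSum_rayIntegral_exp_mul_stableKernel (hα : α ∈ Ioo 0 1) (hθ : θ ∈ Ioo (π / 2) π) (x : ℝ) :
    HasSum (fun k => rayIntegral θ (stableKernelTerm α x k))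
      (rayIntegral θ fun s => Complex.exp s * stableKernel α x s) := by
  have hcos : Real.cos θ < 0 :=
    Real.cos_neg_of_pi_div_two_lt_of_lt hθ.1 (by linarith [hθ.2, pi_pos])
  have hnorm : ∀ᵐ r ∂volume.restrict (Ioi (0 : ℝ)),
      HasSum (fun k => ‖stableKernelTerm α x k (ray θ r)‖)
        (r ^ (α - 1) * Real.exp (|x| * r ^ α - -Real.cos θ * r)) :=
    (ae_restrict_mem measurableSet_Ioi).mono fun r hr => hasSum_norm_stableKernelTerm (le_of_lt hr)
  refine (hasSum_integral_of_dominated_convergence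
    (fun k r => ‖stableKernelTerm α x k (ray θ r)‖) (fun k => ?_)
    (fun k => .of_forall fun r => le_rfl) (hnorm.mono fun r hr => hr.summable) ?_
    (.of_forall fun r => hasSum_stableKernelTerm α x _)).mul_left _
  · refine Measurable.aestronglyMeasurable ?_
    unfold stableKernelTerm
    fun_prop
  · exact (integrableOn_rpow_mul_exp_mul_rpow_sub hα (neg_pos.2 hcos) (abs_nonneg x)).congr
      (hnorm.mono fun r hr => hr.tsum_eq.symm)

theorem mittagLefflerDensity_eq_im_rayIntegral (hα : α ∈ Ioo 0 1) (hθ : θ ∈ Ioo (π / 2) π) (x : ℝ) :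
    mittagLefflerDensity α x =
      1 / π * (rayIntegral θ fun s => Complex.exp s * stableKernel α x s).im := by
  rw [mittagLefflerDensity,
    ← (Complex.hasSum_im (hasSum_rayIntegral_exp_mul_stableKernel hα hθ x)).tsum_eq]
  congr! 3 with k
  rw [rayIntegral_stableKernelTerm hα.1 hθ, Complex.im_ofReal_mul, Complex.exp_ofReal_mul_I_im]
  ring

lemma stableKernel_ofReal_mul {t : ℝ} (ht : 0 < t) {s : ℂ} (hs : s ≠ 0) (α x : ℝ) :
    stableKernel α (t ^ (-α) * x) (t * s) =
      (t : ℂ) ^ ((α - 1 : ℝ) : ℂ) * stableKernel α x s := by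
  have hcancel : (t : ℂ) ^ (-α : ℂ) * (t : ℂ) ^ (α : ℂ) = 1 := by
    rw [← Complex.cpow_add _ _ (mod_cast ht.ne'), neg_add_cancel, Complex.cpow_zero]
  have hexponent : (t ^ (-α) * x : ℝ) * (t * s) ^ (α : ℂ) = x * s ^ (α : ℂ) := by
    rw [ofReal_mul_cpow ht hs, Complex.ofReal_mul, Complex.ofReal_cpow ht.le, Complex.ofReal_neg]
    linear_combination (x * s ^ (α : ℂ)) * hcancel
  rw [stableKernel, hexponent, ofReal_mul_cpow ht hs, stableKernel, mul_assoc]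

theorem rpow_neg_mul_mittagLefflerDensity (hα : α ∈ Ioo 0 1) (hθ : θ ∈ Ioo (π / 2) π) {t : ℝ}
    (ht : 0 < t) (x : ℝ) :
    t ^ (-α) * mittagLefflerDensity α (t ^ (-α) * x) =
      1 / π * (rayIntegral θ fun s => Complex.exp (t * s) * stableKernel α x s).im := by
  have hscale : rayIntegral θ (fun s => Complex.exp s * stableKernel α (t ^ (-α) * x) s) =
      (t ^ α : ℝ) * rayIntegral θ fun s => Complex.exp (t * s) * stableKernel α x s := by
    have ht' : (t : ℂ) ≠ 0 := mod_cast ht.ne'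
    have hpow : (t ^ α : ℝ) = t * (t : ℂ) ^ ((α - 1 : ℝ) : ℂ) := by
      rw [Complex.ofReal_sub, Complex.ofReal_one, Complex.cpow_sub _ _ ht', Complex.cpow_one,
        mul_div_cancel₀ _ ht', Complex.ofReal_cpow ht.le]
    rw [hpow, mul_assoc, ← rayIntegral_const_mul, ← inv_mul_eq_iff_eq_mul₀ ht',
      ← rayIntegral_comp_mul_left θ _ ht]
    refine rayIntegral_congr fun r hr => ?_
    rw [stableKernel_ofReal_mul ht (ray_ne_zero hr), mul_left_comm]
  rw [mittagLefflerDensity_eq_im_rayIntegral hα hθ, hscale, Complex.im_ofReal_mul,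
    Real.rpow_neg ht.le]
  field_simp

end LaplaceInversion

section ExponentialMixture

variable {θ r : ℝ} {s : ℂ} {g : ℂ → ℂ}

lemma ray_re_lt_one (hcos : Real.cos θ < 0) (hr : 0 < r) : (ray θ r).re < 1 := by
  rw [ray_re]
  nlinarith

lemma integral_exp_sub_one_mul (hs : s.re < 1) (c : ℂ) :
    ∫ t in Ioi (0 : ℝ), Complex.exp ((s - 1) * t) * c = c / (1 - s) := by
  rw [integral_mul_const, integral_exp_mul_complex_Ioi (by simpa using hs), Complex.ofReal_zero,
    mul_zero, Complex.exp_zero, neg_div, ← div_neg, neg_sub, one_div_mul_eq_div]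

lemma integral_norm_exp_sub_one_mul (hs : s.re < 1) (c : ℂ) :
    ∫ t in Ioi (0 : ℝ), ‖Complex.exp ((s - 1) * t) * c‖ = ‖c‖ / (1 - s.re) := by
  have hnorm (t : ℝ) : ‖Complex.exp ((s - 1) * t)‖ = Real.exp ((s.re - 1) * t) := by
    rw [Complex.norm_exp, Complex.re_mul_ofReal, Complex.sub_re, Complex.one_re]
  simp only [norm_mul, hnorm, integral_mul_const]
  rw [integral_exp_mul_Ioi (sub_neg.2 hs), mul_zero, Real.exp_zero, neg_div, ← div_neg, neg_sub,
    one_div_mul_eq_div]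

lemma norm_one_sub_ray_le (hcos : Real.cos θ < 0) (hr : 0 ≤ r) :
    ‖1 - ray θ r‖ ≤ (-Real.cos θ)⁻¹ * (1 - (ray θ r).re) := by
  have htriangle : ‖1 - ray θ r‖ ≤ 1 + r := by
    simpa [norm_ray hr] using norm_sub_le 1 (ray θ r)
  rw [← div_eq_inv_mul, le_div_iff₀ (neg_pos.2 hcos), ray_re]
  nlinarith [Real.neg_one_le_cos θ]

lemma integral_norm_exp_ray_sub_one_mul_le (hcos : Real.cos θ < 0) (hr : 0 < r) (c : ℂ) :
    ∫ t in Ioi (0 : ℝ), ‖Complex.exp ((ray θ r - 1) * t) * c‖ ≤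
      (-Real.cos θ)⁻¹ * ‖c / (1 - ray θ r)‖ := by
  have hre : 0 < 1 - (ray θ r).re := sub_pos.2 (ray_re_lt_one hcos hr)
  have hnorm : 0 < ‖1 - ray θ r‖ := norm_pos_iff.2 fun h =>
    hre.ne' (by simpa using congrArg Complex.re h)
  rw [integral_norm_exp_sub_one_mul (ray_re_lt_one hcos hr), norm_div, ← mul_div_assoc,
    div_le_div_iff₀ hre hnorm, mul_right_comm, mul_comm]
  gcongr
  exact norm_one_sub_ray_le hcos hr.le

lemma integrable_prod_exp_ray_sub_one_mul (hcos : Real.cos θ < 0) (hg : Measurable g)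
    (hint : IntegrableOn (fun r => g (ray θ r) / (1 - ray θ r)) (Ioi 0)) :
    Integrable (fun z : ℝ × ℝ => Complex.exp ((ray θ z.2 - 1) * z.1) * g (ray θ z.2))
      ((volume.restrict (Ioi 0)).prod (volume.restrict (Ioi 0))) := by
  have hmeas : Measurable fun z : ℝ × ℝ =>
      Complex.exp ((ray θ z.2 - 1) * z.1) * g (ray θ z.2) := by fun_prop
  refine (integrable_prod_iff' hmeas.aestronglyMeasurable).2
    ⟨(ae_restrict_mem measurableSet_Ioi).mono fun r hr => ?_, ?_⟩
  · have hre : (ray θ r - 1).re < 0 := by simpa using ray_re_lt_one hcos hr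
    exact (integrableOn_exp_mul_complex_Ioi hre 0).mul_const (g (ray θ r))
  · refine (hint.norm.const_mul (-Real.cos θ)⁻¹).mono'
      hmeas.aestronglyMeasurable.norm.prod_swap.integral_prod_right'
      ((ae_restrict_mem measurableSet_Ioi).mono fun r hr => ?_)
    rw [Real.norm_of_nonneg (integral_nonneg fun t => norm_nonneg _)]
    exact integral_norm_exp_ray_sub_one_mul_le hcos hr (g (ray θ r))

lemma exp_neg_mul_rayIntegral (θ t : ℝ) (g : ℂ → ℂ) :
    Real.exp (-t) * rayIntegral θ (fun s => Complex.exp (t * s) * g s) =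
      Complex.exp (θ * Complex.I) *
        ∫ r in Ioi (0 : ℝ), Complex.exp ((ray θ r - 1) * t) * g (ray θ r) := by
  rw [← rayIntegral_const_mul, rayIntegral]
  congr! 3 with r
  rw [← mul_assoc, Complex.ofReal_exp, ← Complex.exp_add]
  push_cast
  ring_nf

lemma integrableOn_exp_neg_mul_rayIntegral (hcos : Real.cos θ < 0) (hg : Measurable g)
    (hint : IntegrableOn (fun r => g (ray θ r) / (1 - ray θ r)) (Ioi 0)) :
    IntegrableOn (fun t : ℝ => Real.exp (-t) *
      rayIntegral θ fun s => Complex.exp (t * s) * g s) (Ioi 0) := by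
  simp only [exp_neg_mul_rayIntegral]
  exact (integrable_prod_exp_ray_sub_one_mul hcos hg hint).integral_prod_left.const_mul _

lemma integral_exp_neg_mul_rayIntegral (hcos : Real.cos θ < 0) (hg : Measurable g)
    (hint : IntegrableOn (fun r => g (ray θ r) / (1 - ray θ r)) (Ioi 0)) :
    ∫ t in Ioi (0 : ℝ), Real.exp (-t) * rayIntegral θ (fun s => Complex.exp (t * s) * g s) =
      rayIntegral θ fun s => g s / (1 - s) := by
  simp only [exp_neg_mul_rayIntegral, integral_const_mul]
  rw [integral_integral_swap (integrable_prod_exp_ray_sub_one_mul hcos hg hint), rayIntegral]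
  congr 1
  exact setIntegral_congr_fun measurableSet_Ioi fun r hr =>
    integral_exp_sub_one_mul (ray_re_lt_one hcos hr) _

end ExponentialMixture

section PoleRemoval

variable {α θ : ℝ} {h : ℂ → ℂ} {S : Set ℂ}

lemma isBigO_div_one_sub_zero (hh : h =O[𝓟 S] fun s => ‖s‖ ^ (α - 1)) :
    (fun s => h s / (1 - s)) =O[𝓝[S] 0] fun s => ‖s‖ ^ (-(1 - α)) := by
  have hinv : Tendsto (fun s : ℂ => (1 - s)⁻¹) (𝓝[S] 0) (𝓝 1) := by
    have hcont : ContinuousAt (fun s : ℂ => (1 - s)⁻¹) 0 :=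
      (by fun_prop : ContinuousAt (fun s : ℂ => 1 - s) 0).inv₀ (by simp)
    simpa using hcont.tendsto.mono_left nhdsWithin_le_nhds
  simpa only [div_eq_mul_inv, mul_one, neg_sub] using
    (hh.mono (le_principal_iff.2 self_mem_nhdsWithin)).mul (hinv.isBigO_one ℝ)

lemma isBigO_inv_one_sub_cobounded :
    (fun s : ℂ => (1 - s)⁻¹) =O[Bornology.cobounded ℂ] fun s => ‖s‖ ^ (-1 : ℝ) := by
  have hlarge : ∀ᶠ s : ℂ in Bornology.cobounded ℂ, 2 ≤ ‖s‖ :=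
    tendsto_norm_cobounded_atTop.eventually_ge_atTop 2
  refine .of_bound 2 (hlarge.mono fun s hs => ?_)
  have htriangle : ‖s‖ / 2 ≤ ‖1 - s‖ := by
    have := norm_sub_norm_le s 1
    rw [norm_one, norm_sub_rev] at this
    linarith
  calc ‖(1 - s)⁻¹‖ = ‖1 - s‖⁻¹ := norm_inv _
    _ ≤ (‖s‖ / 2)⁻¹ := inv_anti₀ (by linarith) htriangle
    _ = 2 * ‖‖s‖ ^ (-1 : ℝ)‖ := by
      rw [Real.rpow_neg_one, norm_inv, norm_norm, inv_div, div_eq_mul_inv]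

lemma isBigO_div_one_sub_cobounded (hS : (0 : ℂ) ∉ S)
    (hh : h =O[𝓟 S] fun s => ‖s‖ ^ (α - 1)) :
    (fun s => h s / (1 - s)) =O[Bornology.cobounded ℂ ⊓ 𝓟 S] fun s => ‖s‖ ^ (-(2 - α)) := by
  refine ((hh.mono inf_le_right).mul (isBigO_inv_one_sub_cobounded.mono inf_le_left)).congr'
    (.of_forall fun s => (div_eq_mul_inv _ _).symm)
    (eventually_inf_principal.2 (.of_forall fun s hs => ?_))
  simp only [← Real.rpow_add (norm_pos_iff.2 fun h0 : s = 0 => hS (h0 ▸ hs))]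
  ring_nf

lemma integrableOn_div_one_sub_ray (hα : α ∈ Ioo 0 1) (hθ : θ ∈ Ioo 0 π)
    (hcont : ContinuousOn h (sector θ θ))
    (hh : h =O[𝓟 (sector θ θ)] fun s => ‖s‖ ^ (α - 1)) :
    IntegrableOn (fun r => h (ray θ r) / (1 - ray θ r)) (Ioi 0) := by
  have hne (s : ℂ) (hs : s ∈ sector θ θ) : 1 - s ≠ 0 :=
    sub_ne_zero.2 (ne_one_of_mem_sector_self hθ.1.ne' hs).symm
  exact integrableOn_ray (g := fun s => h s / (1 - s)) ⟨by linarith [hθ.1, pi_pos], hθ.2.le⟩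
    left_mem_uIcc (hcont.div (by fun_prop) hne)
    (by linarith [hα.1]) (isBigO_div_one_sub_zero hh)
    (by linarith [hα.2]) (isBigO_div_one_sub_cobounded (zero_notMem_sector _ _) hh)

lemma im_rayIntegral_zero_eq_zero (hh : ∀ᵐ r : ℝ ∂volume.restrict (Ioi 0), (h r).im = 0) :
    (rayIntegral 0 h).im = 0 := by
  have hreal : ∫ r in Ioi (0 : ℝ), h r = ∫ r in Ioi (0 : ℝ), ((h r).re : ℂ) :=
    integral_congr_ae (hh.mono fun r hr => Complex.ext rfl hr)
  simp only [rayIntegral, ray_zero_left, hreal, integral_complex_ofReal]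
  simp

lemma neg_dslope_one_eq_div_one_sub (h_one : h 1 = 0) {s : ℂ} (hs : s ≠ 1) :
    -dslope h 1 s = h s / (1 - s) := by
  rw [dslope_of_ne _ hs, slope_def_field, h_one, sub_zero, ← div_neg, neg_sub]

lemma rayIntegral_div_one_sub_eq_rayIntegral_neg_dslope (hα : α ∈ Ioo 0 1) (hθ : θ ∈ Ioo 0 π)
    (hdiff : DifferentiableOn ℂ h Complex.slitPlane)
    (hh : h =O[𝓟 (sector θ 0)] fun s => ‖s‖ ^ (α - 1)) (h_one : h 1 = 0) :
    (rayIntegral θ fun s => h s / (1 - s)) = rayIntegral 0 fun s => -dslope h 1 s := by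
  have hθ' : θ ∈ Ioo (-π) π := ⟨by linarith [hθ.1, pi_pos], hθ.2⟩
  have h0' : (0 : ℝ) ∈ Ioo (-π) π := ⟨by linarith [pi_pos], pi_pos⟩
  have hhol : DifferentiableOn ℂ (fun s => -dslope h 1 s) (sector θ 0) :=
    (((Complex.differentiableOn_dslope (Complex.isOpen_slitPlane.mem_nhds
      Complex.one_mem_slitPlane)).2 hdiff).neg).mono (sector_subset_slitPlane hθ' h0')
  have hzero : ∀ᶠ s in 𝓝[sector θ 0] (0 : ℂ), h s / (1 - s) = -dslope h 1 s :=
    ((eventually_ne_nhds zero_ne_one).filter_mono nhdsWithin_le_nhds).mono fun s hs =>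
      (neg_dslope_one_eq_div_one_sub h_one hs).symm
  have htop : ∀ᶠ s in Bornology.cobounded ℂ ⊓ 𝓟 (sector θ 0), h s / (1 - s) = -dslope h 1 s :=
    ((Bornology.eventually_ne_cobounded 1).filter_mono inf_le_left).mono fun s hs =>
      (neg_dslope_one_eq_div_one_sub h_one hs).symm
  calc (rayIntegral θ fun s => h s / (1 - s))
      = rayIntegral θ fun s => -dslope h 1 s :=
        rayIntegral_congr fun r hr => (neg_dslope_one_eq_div_one_sub h_one
          (ne_one_of_mem_sector_self hθ.1.ne'
            (ray_mem_sector (Ioo_subset_Ioc_self hθ') left_mem_uIcc hr))).symm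
    _ = rayIntegral 0 fun s => -dslope h 1 s :=
        rayIntegral_eq_of_differentiableOn (Ioo_subset_Ioc_self hθ') (Ioo_subset_Ioc_self h0') hhol
          (by linarith [hα.1]) ((isBigO_div_one_sub_zero hh).congr' hzero .rfl)
          (by linarith [hα.2])
          ((isBigO_div_one_sub_cobounded (zero_notMem_sector _ _) hh).congr' htop .rfl)

theorem im_rayIntegral_div_one_sub_eq_zero (hα : α ∈ Ioo 0 1) (hθ : θ ∈ Ioo 0 π)
    (hdiff : DifferentiableOn ℂ h Complex.slitPlane)
    (hh : h =O[𝓟 (sector θ 0)] fun s => ‖s‖ ^ (α - 1))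
    (hreal : ∀ r : ℝ, 0 < r → (h r).im = 0) (h_one : h 1 = 0) :
    (rayIntegral θ fun s => h s / (1 - s)).im = 0 := by
  rw [rayIntegral_div_one_sub_eq_rayIntegral_neg_dslope hα hθ hdiff hh h_one]
  refine im_rayIntegral_zero_eq_zero ?_
  filter_upwards [ae_restrict_mem measurableSet_Ioi, Measure.ae_ne _ 1] with r hr hne
  have hsub : (1 - r : ℂ) = (1 - r : ℝ) := by push_cast; rfl
  rw [neg_dslope_one_eq_div_one_sub h_one (mod_cast hne), hsub, Complex.div_ofReal_im,
    hreal r hr, zero_div]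

end PoleRemoval

section MittagLeffler

variable {α θ x : ℝ}

lemma measurable_stableKernel (α x : ℝ) : Measurable (stableKernel α x) := by
  unfold stableKernel
  fun_prop

lemma differentiableOn_stableKernel (α x : ℝ) :
    DifferentiableOn ℂ (stableKernel α x) Complex.slitPlane := fun _ hs =>
  ((differentiableAt_id.cpow_const hs).mul ((differentiableAt_id.cpow_const hs).const_mul
    (x : ℂ)).neg.cexp).differentiableWithinAt

lemma stableKernel_one (α x : ℝ) : stableKernel α x 1 = Real.exp (-x) := by
  simp [stableKernel]

lemma stableKernel_ofReal_im (α x : ℝ) {r : ℝ} (hr : 0 < r) : (stableKernel α x r).im = 0 := by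
  rw [stableKernel, ← Complex.ofReal_cpow hr.le, ← Complex.ofReal_cpow hr.le]
  norm_cast

lemma norm_stableKernel_le (hα : 0 ≤ α) (hx : 0 ≤ x) {s : ℂ} (hs : |s.arg| * α ≤ π / 2) :
    ‖stableKernel α x s‖ ≤ ‖s‖ ^ (α - 1) := by
  have hre : 0 ≤ (s ^ (α : ℂ)).re := by
    have hcos : 0 ≤ Real.cos (s.arg * α) :=
      Real.cos_nonneg_of_mem_Icc (abs_le.1 (by rwa [abs_mul, abs_of_nonneg hα]))
    rw [Complex.cpow_ofReal_re]
    positivity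
  rw [stableKernel, norm_mul, Complex.norm_cpow_real, Complex.norm_exp, Complex.neg_re,
    Complex.re_ofReal_mul]
  exact mul_le_of_le_one_right (by positivity)
    (Real.exp_le_one_iff.2 (neg_nonpos.2 (mul_nonneg hx hre)))

lemma isBigO_stableKernel (hα : 0 ≤ α) (hθα : |θ| * α ≤ π / 2) (hx : 0 ≤ x) :
    stableKernel α x =O[𝓟 (sector θ 0)] fun s => ‖s‖ ^ (α - 1) := by
  refine .of_bound 1 (eventually_principal.2 fun s hs => ?_)
  have harg : |s.arg| ≤ |θ| := by simpa using abs_sub_right_of_mem_uIcc hs.2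
  rw [one_mul, Real.norm_of_nonneg (by positivity)]
  exact norm_stableKernel_le hα hx ((mul_le_mul_of_nonneg_right harg hα).trans hθα)

lemma integrableOn_stableKernel_div_one_sub_ray (hα : α ∈ Ioo 0 1) (hθ : θ ∈ Ioo 0 π)
    (hθα : θ * α ≤ π / 2) (hx : 0 ≤ x) :
    IntegrableOn (fun r => stableKernel α x (ray θ r) / (1 - ray θ r)) (Ioi 0) := by
  have hθ' : θ ∈ Ioo (-π) π := ⟨by linarith [hθ.1, pi_pos], hθ.2⟩
  rw [← abs_of_pos hθ.1] at hθα
  exact integrableOn_div_one_sub_ray hα hθ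
    ((differentiableOn_stableKernel α x).continuousOn.mono (sector_subset_slitPlane hθ' hθ'))
    ((isBigO_stableKernel hα.1.le hθα hx).mono (principal_mono.2 (sector_self_subset θ 0)))

theorem im_rayIntegral_stableKernel_div_one_sub (hα : α ∈ Ioo 0 1) (hθ : θ ∈ Ioo 0 π)
    (hθα : θ * α ≤ π / 2) (hx : 0 ≤ x) :
    (rayIntegral θ fun s => stableKernel α x s / (1 - s)).im =
      Real.exp (-x) * (rayIntegral θ fun s => stableKernel α 0 s / (1 - s)).im := by
  have hθα' : |θ| * α ≤ π / 2 := by rwa [abs_of_pos hθ.1]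
  have hzero := im_rayIntegral_div_one_sub_eq_zero hα hθ
    (h := fun s => stableKernel α x s - Real.exp (-x) * stableKernel α 0 s)
    ((differentiableOn_stableKernel α x).sub
      ((differentiableOn_stableKernel α 0).const_mul _))
    ((isBigO_stableKernel hα.1.le hθα' hx).sub
      ((isBigO_stableKernel hα.1.le hθα' le_rfl).const_mul_left _))
    (fun r hr => by
      rw [Complex.sub_im, Complex.im_ofReal_mul, stableKernel_ofReal_im α x hr,
        stableKernel_ofReal_im α 0 hr, mul_zero, sub_zero])
    (by simp [stableKernel_one])
  simp only [sub_div, mul_div_assoc] at hzero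
  rw [rayIntegral_sub (h := fun s => Real.exp (-x) * (stableKernel α 0 s / (1 - s)))
    (integrableOn_stableKernel_div_one_sub_ray hα hθ hθα hx)
    ((integrableOn_stableKernel_div_one_sub_ray hα hθ hθα le_rfl).const_mul _),
    rayIntegral_const_mul, Complex.sub_im, Complex.im_ofReal_mul] at hzero
  exact sub_eq_zero.1 hzero

theorem integral_exp_neg_mul_mittagLefflerDensity (hα : α ∈ Ioo 0 1) (hθ : θ ∈ Ioo (π / 2) π)
    (hθα : θ * α ≤ π / 2) (hx : 0 ≤ x) :
    ∫ t in Ioi (0 : ℝ), Real.exp (-t) * t ^ (-α) * mittagLefflerDensity α (t ^ (-α) * x) =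
      1 / π * (rayIntegral θ fun s => stableKernel α x s / (1 - s)).im := by
  have hcos : Real.cos θ < 0 :=
    Real.cos_neg_of_pi_div_two_lt_of_lt hθ.1 (by linarith [hθ.2, pi_pos])
  have hint := integrableOn_stableKernel_div_one_sub_ray hα ⟨by linarith [hθ.1, pi_pos], hθ.2⟩
    hθα hx
  have hmeas := measurable_stableKernel α x
  calc ∫ t in Ioi (0 : ℝ), Real.exp (-t) * t ^ (-α) * mittagLefflerDensity α (t ^ (-α) * x)
      = ∫ t in Ioi (0 : ℝ), 1 / π * (Real.exp (-t) *
          rayIntegral θ fun s => Complex.exp (t * s) * stableKernel α x s).im :=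
        setIntegral_congr_fun measurableSet_Ioi fun t ht => by
          simp only [mul_assoc, rpow_neg_mul_mittagLefflerDensity hα hθ ht, Complex.im_ofReal_mul]
          ring
    _ = 1 / π * (∫ t in Ioi (0 : ℝ), Real.exp (-t) *
          rayIntegral θ fun s => Complex.exp (t * s) * stableKernel α x s).im := by
        rw [integral_const_mul]
        congr 1
        exact integral_im (integrableOn_exp_neg_mul_rayIntegral hcos hmeas hint)
    _ = _ := by rw [integral_exp_neg_mul_rayIntegral hcos hmeas hint]

lemma mittagLefflerDensity_zero (α : ℝ) :
    mittagLefflerDensity α 0 = Real.sin (π * α) * Real.Gamma α / π := by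
  rw [mittagLefflerDensity, tsum_eq_single 0 fun k hk => by simp [hk]]
  simp [div_eq_inv_mul]

lemma integral_exp_neg_mul_mittagLefflerDensity_zero (hα : α ∈ Ioo 0 1) :
    ∫ t in Ioi (0 : ℝ), Real.exp (-t) * t ^ (-α) * mittagLefflerDensity α (t ^ (-α) * 0) = 1 := by
  have hsin : 0 < Real.sin (π * α) :=
    Real.sin_pos_of_pos_of_lt_pi (mul_pos pi_pos hα.1) (mul_lt_of_lt_one_right pi_pos hα.2)
  have hGamma : ∫ t in Ioi (0 : ℝ), Real.exp (-t) * t ^ (-α) = Real.Gamma (1 - α) := by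
    rw [Real.Gamma_eq_integral (sub_pos.2 hα.2), sub_sub_cancel_left]
  simp only [mul_zero]
  rw [integral_mul_const, hGamma, mittagLefflerDensity_zero]
  calc Real.Gamma (1 - α) * (Real.sin (π * α) * Real.Gamma α / π)
      = Real.Gamma α * Real.Gamma (1 - α) * Real.sin (π * α) / π := by ring
    _ = 1 := by
      rw [Real.Gamma_mul_Gamma_one_sub, div_mul_cancel₀ _ hsin.ne', div_self pi_ne_zero]

lemma exists_angle_mul_le_pi_div_two (hα : α ∈ Ioo 0 1) : ∃ θ ∈ Ioo (π / 2) π, θ * α ≤ π / 2 := by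
  have hden : 0 < 1 + α := by linarith [hα.1]
  refine ⟨π / (1 + α), ⟨?_, ?_⟩, ?_⟩
  · exact div_lt_div_of_pos_left pi_pos hden (by linarith [hα.2])
  · exact div_lt_self pi_pos (by linarith [hα.1])
  · rw [div_mul_eq_mul_div, div_le_div_iff₀ hden two_pos]
    nlinarith [pi_pos, hα.2]

lemma mittagLeffler23_eq (x : ℝ) : mittagLeffler23 x = mittagLefflerDensity (2 / 3) x := by
  rw [mittagLeffler23, mittagLefflerDensity]
  congr! 7 <;> ring

end MittagLeffler

theorem stmt13_general {α x : ℝ} (hα : α ∈ Ioo 0 1) (hx : 0 ≤ x) :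
    ∫ t in Ioi (0 : ℝ), Real.exp (-t) * t ^ (-α) * mittagLefflerDensity α (t ^ (-α) * x) =
      Real.exp (-x) := by
  obtain ⟨θ, hθ, hθα⟩ := exists_angle_mul_le_pi_div_two hα
  have hθ' : θ ∈ Ioo 0 π := ⟨by linarith [hθ.1, pi_pos], hθ.2⟩
  rw [integral_exp_neg_mul_mittagLefflerDensity hα hθ hθα hx,
    im_rayIntegral_stableKernel_div_one_sub hα hθ' hθα hx, mul_left_comm,
    ← integral_exp_neg_mul_mittagLefflerDensity hα hθ hθα le_rfl,
    integral_exp_neg_mul_mittagLefflerDensity_zero hα, mul_one]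

/-- the exponential-time mixture identity
`∫₀^∞ e^{-t}·t^{-2/3}·f_{2/3}(t^{-2/3}x) dt = e^{-x}` for `x ≥ 0`. -/
theorem stmt13 :
    ∀ x : ℝ, 0 ≤ x →
      (∫ t in Ioi (0:ℝ),
        Real.exp (-t) * t ^ (-(2:ℝ)/3) * mittagLeffler23 (t ^ (-(2:ℝ)/3) * x)) =
      Real.exp (-x) := by
  intro x hx
  simpa only [mittagLeffler23_eq, neg_div] using stmt13_general (α := 2 / 3) (by norm_num) hx
end
end

section
/- For every z ≥ 0, the Mittag-Leffler density of index 2/3 admits the closed form f_{2/3}(z) = (2^{1/3}/√(3π))·z·e^{-4z³/27}·U(1/6, 4/3; 4z³/27), where for w > 0, U(1/6,4/3;w) = (1/Γ(1/6))·∫₀^∞ e^{-ws}·s^{-5/6}·(1+s)^{1/6} ds (and at w = 0 the formula is interpreted by continuity). -/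
open Real MeasureTheory Set Filter Topology

noncomputable section

/-- Confluent hypergeometric function of the second kind (Tricomi function),
via its integral representation. -/
def tricomiU (a b z : ℝ) : ℝ :=
  (1 / Real.Gamma a) * ∫ s in Ioi (0:ℝ), Real.exp (-z * s) * s ^ (a - 1) * (1 + s) ^ (b - a - 1)

/-!
Let `x` be either side of the identity. The pair `(x, x' + (4/9) t² x)` solves a planar linear
system on `(0, ∞)` whose Lipschitz constant stays bounded near `0`, so by Grönwall's inequality a
solution is determined by its limit at `0⁺`. For the power series, the system is the recurrence
`(k+2)(k+3) c (k+3) = -(2/9)(2k+5) c k` of its coefficients. For the closed form, with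
`w = 4t³/27`, it comes from `(e^{-w} U(a,b;w))' = -e^{-w} U(a,b+1;w)` and from the contiguous
relation among `U(a,b-1)`, `U(a,b)` and `U(a,b+1)`, an integration by parts. The limits at `0⁺` of
`w^{1/3} U(1/6,4/3;w)` and `U(1/6,1/3;w)` are Gamma quotients, and Legendre's duplication formula
identifies them with the values at `0` of the power series and of its derivative.
-/

section PowerSeries

open FormalMultilinearSeries

variable {𝕜 : Type*} [NontriviallyNormedField 𝕜]

/-- The coefficients of the formal derivative of the power series `∑ c n x ^ n`. -/
def derivCoeff (c : ℕ → 𝕜) (n : ℕ) : 𝕜 := (n + 1) * c (n + 1)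

lemma coeff_one_derivSeries_ofScalars (c : ℕ → 𝕜) (n : ℕ) :
    (ofScalars 𝕜 c).derivSeries.coeff n 1 = derivCoeff c n := by
  simp [derivSeries_coeff_one, derivCoeff]

lemma radius_le_radius_derivCoeff (c : ℕ → 𝕜) :
    (ofScalars 𝕜 c).radius ≤ (ofScalars 𝕜 (derivCoeff c)).radius := by
  refine (radius_le_radius_derivSeries _).trans (radius_le_of_le fun {n} ↦ ?_)
  calc ‖ofScalars 𝕜 (derivCoeff c) n‖
      = ‖(ofScalars 𝕜 c).derivSeries.coeff n 1‖ := by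
        rw [ofScalars_norm, coeff_one_derivSeries_ofScalars]
    _ ≤ ‖(ofScalars 𝕜 c).derivSeries n‖ := by
        refine ((ContinuousLinearMap.le_opNorm _ _).trans_eq ?_)
        simp

lemma hasSum_ofScalarsSum [CompleteSpace 𝕜] {c : ℕ → 𝕜} {x : 𝕜}
    (hx : ‖x‖ₑ < (ofScalars 𝕜 c).radius) :
    HasSum (fun n ↦ c n * x ^ n) (ofScalarsSum c x) := by
  simpa [ofScalarsSum, mul_comm] using (ofScalars 𝕜 c).hasSum (by simpa using hx)

theorem hasDerivAt_ofScalarsSum [CompleteSpace 𝕜] {c : ℕ → 𝕜} {x : 𝕜}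
    (hx : ‖x‖ₑ < (ofScalars 𝕜 c).radius) :
    HasDerivAt (ofScalarsSum c) (ofScalarsSum (derivCoeff c) x) x := by
  have hderiv := ((ofScalars 𝕜 c).hasFDerivAt_sum hx).hasDerivAt
  have hsum := ((ofScalars 𝕜 c).derivSeries.hasSum
    (by simpa using hx.trans_le (radius_le_radius_derivSeries _))).mapL
      (ContinuousLinearMap.apply 𝕜 𝕜 1)
  have hterm (n : ℕ) : ContinuousLinearMap.apply 𝕜 𝕜 1 ((ofScalars 𝕜 c).derivSeries n fun _ ↦ x) =
      derivCoeff c n * x ^ n := by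
    rw [← coeff_one_derivSeries_ofScalars, apply_eq_pow_smul_coeff]
    simp [mul_comm]
  simp only [hterm] at hsum
  exact hderiv.congr_deriv
    (hsum.unique (hasSum_ofScalarsSum (hx.trans_le (radius_le_radius_derivCoeff c))))

lemma hasSum_natCast_mul_ofScalarsSum [CompleteSpace 𝕜] {c : ℕ → 𝕜} {x : 𝕜}
    (hx : ‖x‖ₑ < (ofScalars 𝕜 c).radius) :
    HasSum (fun n ↦ n * c n * x ^ n) (x * ofScalarsSum (derivCoeff c) x) := by
  rw [← hasSum_nat_add_iff' 1]
  simpa [derivCoeff, pow_succ', mul_left_comm, mul_assoc] using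
    (hasSum_ofScalarsSum (hx.trans_le (radius_le_radius_derivCoeff c))).mul_left x

end PowerSeries

theorem ODE_solution_unique_of_tendsto_dist {E : Type*} [NormedAddCommGroup E]
    [NormedSpace ℝ E] {v : ℝ → E → E} {K : NNReal} {f g : ℝ → E} {a b : ℝ}
    (hab : a < b) (hv : ∀ t ∈ Ioc a b, LipschitzWith K (v t))
    (hf : ∀ t ∈ Ioc a b, HasDerivAt f (v t (f t)) t)
    (hg : ∀ t ∈ Ioc a b, HasDerivAt g (v t (g t)) t)
    (hfg : Tendsto (fun t ↦ dist (f t) (g t)) (𝓝[>] a) (𝓝 0)) : f b = g b := by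
  have gronwall : ∀ ε ∈ Ioo a b, dist (f b) (g b) ≤ dist (f ε) (g ε) * exp (K * (b - ε)) := by
    intro ε hε
    refine dist_le_of_trajectories_ODE_of_mem (s := fun _ ↦ univ) (v := v)
      (fun t ht ↦ (hv t ⟨hε.1.trans_le ht.1, ht.2.le⟩).lipschitzOnWith)
      (fun t ht ↦ (hf t ⟨hε.1.trans_le ht.1, ht.2⟩).continuousAt.continuousWithinAt)
      (fun t ht ↦ (hf t ⟨hε.1.trans_le ht.1, ht.2.le⟩).hasDerivWithinAt) (fun _ _ ↦ mem_univ _)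
      (fun t ht ↦ (hg t ⟨hε.1.trans_le ht.1, ht.2⟩).continuousAt.continuousWithinAt)
      (fun t ht ↦ (hg t ⟨hε.1.trans_le ht.1, ht.2.le⟩).hasDerivWithinAt) (fun _ _ ↦ mem_univ _)
      le_rfl b ⟨hε.2.le, le_rfl⟩
  have hexp : Tendsto (fun ε ↦ exp (K * (b - ε))) (𝓝[>] a) (𝓝 (exp (K * (b - a)))) :=
    tendsto_nhdsWithin_of_tendsto_nhds (Continuous.tendsto (by fun_prop) a)
  have hlim := hfg.mul hexp
  rw [zero_mul] at hlim
  exact dist_le_zero.1 (ge_of_tendsto hlim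
    (mem_of_superset (Ioo_mem_nhdsGT hab) gronwall))

section MittagLeffler

open FormalMultilinearSeries

lemma Gamma_add_le_rpow_mul_Gamma {x α : ℝ} (hx : 0 < x) (h0 : 0 < α) (h1 : α < 1) :
    Real.Gamma (x + α) ≤ x ^ α * Real.Gamma x := by
  have hΓ := Real.Gamma_pos_of_pos hx
  calc Real.Gamma (x + α) = Real.Gamma (α * (x + 1) + (1 - α) * x) := by ring_nf
    _ ≤ Real.Gamma (x + 1) ^ α * Real.Gamma x ^ (1 - α) :=
      Real.Gamma_mul_add_mul_le_rpow_Gamma_mul_rpow_Gamma (by positivity) hx h0 (by linarith)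
        (by ring)
    _ = x ^ α * Real.Gamma x := by
      rw [Real.Gamma_add_one hx.ne', mul_rpow hx.le hΓ.le, mul_assoc, ← rpow_add hΓ,
        add_sub_cancel, rpow_one]

/-- The coefficients of `π f_α` as a power series in `x`, for `f_α` the Mittag-Leffler density of
index `α`; the sign of the `(-x) ^ k` of the usual definition is part of the coefficient. -/
def mittagLefflerCoeff (α : ℝ) (k : ℕ) : ℝ :=
  (-1) ^ k * (sin (π * α * (k + 1)) * Real.Gamma (α * (k + 1)) / k.factorial)

lemma tendsto_Gamma_div_factorial_ratio {α : ℝ} (h0 : 0 < α) (h1 : α < 1) :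
    Tendsto (fun k : ℕ ↦ ‖Real.Gamma (α * ((k + 1 : ℕ) + 1)) / (k + 1).factorial‖ /
      ‖Real.Gamma (α * (k + 1)) / k.factorial‖) atTop (𝓝 0) := by
  have hlim : Tendsto (fun k : ℕ ↦ α ^ α * ((k : ℝ) + 1) ^ (-(1 - α))) atTop (𝓝 0) := by
    simpa using ((tendsto_rpow_neg_atTop (sub_pos.2 h1)).comp
      (tendsto_atTop_add_const_right _ (1 : ℝ) tendsto_natCast_atTop_atTop)).const_mul (α ^ α)
  refine squeeze_zero (fun k ↦ by positivity) (fun k ↦ ?_) hlim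
  have hx : 0 < α * ((k : ℝ) + 1) := by positivity
  have hstep : Real.Gamma (α * ((k + 1 : ℕ) + 1)) ≤
      (α * (k + 1)) ^ α * Real.Gamma (α * (k + 1)) := by
    convert Gamma_add_le_rpow_mul_Gamma hx h0 h1 using 2
    push_cast; ring
  rw [norm_of_nonneg (by positivity), norm_of_nonneg (by positivity), div_le_iff₀ (by positivity)]
  calc Real.Gamma (α * ((k + 1 : ℕ) + 1)) / (k + 1).factorial
      ≤ (α * (k + 1)) ^ α * Real.Gamma (α * (k + 1)) / (k + 1).factorial := by gcongr
    _ = α ^ α * ((k : ℝ) + 1) ^ (-(1 - α)) * (Real.Gamma (α * (k + 1)) / k.factorial) := by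
      rw [mul_rpow h0.le (by positivity), neg_sub, rpow_sub_one (by positivity),
        Nat.factorial_succ]
      push_cast
      field_simp

theorem radius_mittagLefflerCoeff {α : ℝ} (h0 : 0 < α) (h1 : α < 1) :
    (ofScalars ℝ (mittagLefflerCoeff α)).radius = ⊤ := by
  have hΓ (k : ℕ) : 0 < Real.Gamma (α * (k + 1)) := Real.Gamma_pos_of_pos (by positivity)
  have hmajorant : (ofScalars ℝ
      fun k : ℕ ↦ Real.Gamma (α * (k + 1)) / k.factorial).radius = ⊤ :=
    ofScalars_radius_eq_top_of_tendsto _ _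
      (.of_forall fun k ↦ (div_pos (hΓ k) (by positivity)).ne')
      (tendsto_Gamma_div_factorial_ratio h0 h1)
  refine top_unique (hmajorant.symm.trans_le (radius_le_of_le fun {k} ↦ ?_))
  rw [ofScalars_norm, ofScalars_norm,
    mittagLefflerCoeff, norm_mul, norm_pow, norm_neg, norm_one, one_pow, one_mul, mul_div_assoc,
    norm_mul]
  exact mul_le_of_le_one_left (norm_nonneg _) (abs_sin_le_one _)

theorem mittagLeffler23_eq_ofScalarsSum (x : ℝ) :
    mittagLeffler23 x =
      1 / π * ofScalarsSum (mittagLefflerCoeff (2 / 3)) x := by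
  rw [mittagLeffler23, ofScalarsSum_eq_tsum]
  congr 1
  refine tsum_congr fun k ↦ ?_
  rw [mittagLefflerCoeff, neg_pow, smul_eq_mul,
    show 2 * π * ((k : ℝ) + 1) / 3 = π * (2 / 3) * (k + 1) by ring,
    show 2 * ((k : ℝ) + 1) / 3 = 2 / 3 * (k + 1) by ring]
  ring

lemma mittagLefflerCoeff_two_thirds_add_three (k : ℕ) :
    ((k : ℝ) + 2) * (k + 3) * mittagLefflerCoeff (2 / 3) (k + 3) =
      -(2 / 9) * (2 * k + 5) * mittagLefflerCoeff (2 / 3) k := by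
  have hsin : sin (π * (2 / 3) * ((k + 3 : ℕ) + 1)) = sin (π * (2 / 3) * (k + 1)) := by
    rw [← sin_add_two_pi (π * (2 / 3) * (k + 1))]
    congr 1; push_cast; ring
  have hGamma : Real.Gamma (2 / 3 * ((k + 3 : ℕ) + 1)) =
      (2 / 3 * (k + 1) + 1) * (2 / 3 * (k + 1) * Real.Gamma (2 / 3 * (k + 1))) := by
    rw [← Real.Gamma_add_one (by positivity), ← Real.Gamma_add_one (by positivity)]
    congr 1; push_cast; ring
  rw [mittagLefflerCoeff, mittagLefflerCoeff, hsin, hGamma, pow_add, Nat.factorial_succ,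
    Nat.factorial_succ, Nat.factorial_succ]
  push_cast
  field_simp
  ring

lemma mittagLefflerCoeff_two_thirds_zero :
    mittagLefflerCoeff (2 / 3) 0 = √3 / 2 * Real.Gamma (2 / 3) := by
  rw [mittagLefflerCoeff, show π * (2 / 3) * ((0 : ℕ) + 1) = π - π / 3 by push_cast; ring,
    sin_pi_sub, sin_pi_div_three]
  norm_num

lemma mittagLefflerCoeff_two_thirds_one :
    mittagLefflerCoeff (2 / 3) 1 = √3 / 6 * Real.Gamma (1 / 3) := by
  rw [mittagLefflerCoeff, show π * (2 / 3) * ((1 : ℕ) + 1) = π / 3 + π by push_cast; ring,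
    sin_add_pi, sin_pi_div_three, show (2 / 3 : ℝ) * ((1 : ℕ) + 1) = 1 / 3 + 1 by norm_num,
    Real.Gamma_add_one (by norm_num), pow_one, Nat.factorial_one]
  push_cast
  ring

lemma mittagLefflerCoeff_two_thirds_two : mittagLefflerCoeff (2 / 3) 2 = 0 := by
  rw [mittagLefflerCoeff, show π * (2 / 3) * ((2 : ℕ) + 1) = 2 * π by push_cast; ring, sin_two_pi]
  simp

lemma ofScalarsSum_derivCoeff_derivCoeff_mittagLefflerCoeff (x : ℝ) :
    ofScalarsSum (derivCoeff (derivCoeff (mittagLefflerCoeff (2 / 3)))) x =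
      -(4 / 9) * x ^ 2 * ofScalarsSum (derivCoeff (mittagLefflerCoeff (2 / 3))) x -
        10 / 9 * x * ofScalarsSum (mittagLefflerCoeff (2 / 3)) x := by
  set c := mittagLefflerCoeff (2 / 3) with hc
  have hx : ‖x‖ₑ < (ofScalars ℝ c).radius := by
    simp [hc, radius_mittagLefflerCoeff (α := 2 / 3) (by norm_num) (by norm_num)]
  have hx'' : ‖x‖ₑ < (ofScalars ℝ (derivCoeff (derivCoeff c))).radius :=
    hx.trans_le ((radius_le_radius_derivCoeff c).trans (radius_le_radius_derivCoeff _))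
  have hzero : derivCoeff (derivCoeff c) 0 = 0 := by
    simp [derivCoeff, hc, mittagLefflerCoeff_two_thirds_two]
  have hsucc (k : ℕ) : derivCoeff (derivCoeff c) (k + 1) * x ^ (k + 1) =
      -(4 / 9) * x * (k * c k * x ^ k) - 10 / 9 * x * (c k * x ^ k) := by
    have hrec := mittagLefflerCoeff_two_thirds_add_three k
    simp only [derivCoeff, ← hc] at hrec ⊢
    push_cast
    linear_combination x ^ (k + 1) * hrec
  have hsum := hasSum_ofScalarsSum hx''
  rw [← hasSum_nat_add_iff' 1, Finset.sum_range_one, hzero, zero_mul, sub_zero] at hsum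
  simp only [hsucc] at hsum
  rw [hsum.unique (((hasSum_natCast_mul_ofScalarsSum hx).mul_left _).sub
    ((hasSum_ofScalarsSum hx).mul_left _))]
  ring

lemma hasDerivAt_mittagLeffler23 (x : ℝ) :
    HasDerivAt mittagLeffler23 (1 / π * ofScalarsSum (derivCoeff (mittagLefflerCoeff (2 / 3))) x)
      x := by
  rw [show mittagLeffler23 = _ from funext mittagLeffler23_eq_ofScalarsSum]
  refine (hasDerivAt_ofScalarsSum ?_).const_mul _
  simp [radius_mittagLefflerCoeff (α := 2 / 3) (by norm_num) (by norm_num)]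

lemma deriv_mittagLeffler23 (x : ℝ) :
    deriv mittagLeffler23 x = 1 / π * ofScalarsSum (derivCoeff (mittagLefflerCoeff (2 / 3))) x :=
  (hasDerivAt_mittagLeffler23 x).deriv

theorem hasDerivAt_deriv_mittagLeffler23 (x : ℝ) :
    HasDerivAt (deriv mittagLeffler23)
      (-(4 / 9) * x ^ 2 * deriv mittagLeffler23 x - 10 / 9 * x * mittagLeffler23 x) x := by
  have hradius : (ofScalars ℝ (derivCoeff (mittagLefflerCoeff (2 / 3)))).radius = ⊤ :=
    top_unique ((radius_mittagLefflerCoeff (by norm_num) (by norm_num)).symm.trans_le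
      (radius_le_radius_derivCoeff _))
  have hx : ‖x‖ₑ < (ofScalars ℝ (derivCoeff (mittagLefflerCoeff (2 / 3)))).radius := by
    simp [hradius]
  rw [deriv_mittagLeffler23, mittagLeffler23_eq_ofScalarsSum,
    show deriv mittagLeffler23 = _ from funext deriv_mittagLeffler23]
  refine ((hasDerivAt_ofScalarsSum hx).const_mul (1 / π)).congr_deriv ?_
  rw [ofScalarsSum_derivCoeff_derivCoeff_mittagLefflerCoeff]
  ring

lemma mittagLeffler23_zero : mittagLeffler23 0 = √3 / (2 * π) * Real.Gamma (2 / 3) := by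
  rw [mittagLeffler23_eq_ofScalarsSum, ofScalarsSum_zero, mittagLefflerCoeff_two_thirds_zero]
  ring

lemma deriv_mittagLeffler23_zero :
    deriv mittagLeffler23 0 = √3 / (6 * π) * Real.Gamma (1 / 3) := by
  rw [deriv_mittagLeffler23, ofScalarsSum_zero, derivCoeff, zero_add,
    mittagLefflerCoeff_two_thirds_one]
  push_cast
  ring

end MittagLeffler

lemma integrableOn_rpow_mul_exp_neg_mul {a r : ℝ} (ha : 0 < a) (hr : 0 < r) :
    IntegrableOn (fun s ↦ s ^ (a - 1) * exp (-(r * s))) (Ioi 0) := by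
  simpa using integrableOn_rpow_mul_exp_neg_mul_rpow (s := a - 1) (by linarith) one_pos hr

section Tricomi

/-- The integrand of the integral over `(0, ∞)` defining `tricomiU a b z`. -/
def tricomiIntegrand (a b z s : ℝ) : ℝ := exp (-z * s) * s ^ (a - 1) * (1 + s) ^ (b - a - 1)

variable {a b z : ℝ}

lemma measurable_tricomiIntegrand (a b z : ℝ) : Measurable (tricomiIntegrand a b z) := by
  unfold tricomiIntegrand
  fun_prop

lemma one_add_rpow_le {s : ℝ} (hs : 0 < s) (c : ℝ) :
    (1 + s) ^ c ≤ 2 ^ |c| * (1 + s ^ |c|) := by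
  have hmax : max 1 s ^ |c| ≤ 1 + s ^ |c| := by
    rcases max_cases 1 s with h | h <;> rw [h.1]
    · simpa using rpow_nonneg hs.le |c|
    · simp
  calc (1 + s) ^ c ≤ (1 + s) ^ |c| := rpow_le_rpow_of_exponent_le (by linarith) (le_abs_self c)
    _ ≤ (2 * max 1 s) ^ |c| := by
      gcongr
      linarith [le_max_left 1 s, le_max_right 1 s]
    _ = 2 ^ |c| * max 1 s ^ |c| := mul_rpow zero_le_two (by positivity)
    _ ≤ 2 ^ |c| * (1 + s ^ |c|) := by gcongr

lemma integrableOn_tricomiIntegrand (ha : 0 < a) (hz : 0 < z) (b : ℝ) :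
    IntegrableOn (tricomiIntegrand a b z) (Ioi 0) := by
  set p := |b - a - 1|
  refine (((integrableOn_rpow_mul_exp_neg_mul ha hz).add
    (integrableOn_rpow_mul_exp_neg_mul (a := a + p) (by positivity) hz)).const_mul (2 ^ p)).mono'
    (measurable_tricomiIntegrand a b z).aestronglyMeasurable
    (ae_restrict_of_forall_mem measurableSet_Ioi fun s (hs : 0 < s) ↦ ?_)
  rw [tricomiIntegrand, norm_of_nonneg (by positivity), Pi.add_apply, neg_mul]
  calc exp (-(z * s)) * s ^ (a - 1) * (1 + s) ^ (b - a - 1)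
      ≤ exp (-(z * s)) * s ^ (a - 1) * (2 ^ p * (1 + s ^ p)) := by
        gcongr
        exact one_add_rpow_le hs _
    _ = 2 ^ p * (s ^ (a - 1) * exp (-(z * s)) + s ^ (a + p - 1) * exp (-(z * s))) := by
        rw [add_sub_right_comm, rpow_add hs]
        ring

lemma tricomiIntegrand_add_one {s : ℝ} (hs : 0 < s) :
    tricomiIntegrand a (b + 1) z s = (1 + s) * tricomiIntegrand a b z s := by
  rw [tricomiIntegrand, tricomiIntegrand, show b + 1 - a - 1 = b - a - 1 + 1 by ring,
    rpow_add_one (by positivity)]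
  ring

theorem hasDerivAt_tricomiU (ha : 0 < a) (hz : 0 < z) (b : ℝ) :
    HasDerivAt (tricomiU a b) (tricomiU a b z - tricomiU a (b + 1) z) z := by
  have hint := integrableOn_tricomiIntegrand ha hz b
  have hint' := integrableOn_tricomiIntegrand ha hz (b + 1)
  have hderiv := (hasDerivAt_integral_of_dominated_loc_of_deriv_le
    (μ := volume.restrict (Ioi 0)) (F := tricomiIntegrand a b)
    (F' := fun w s ↦ tricomiIntegrand a b w s - tricomiIntegrand a (b + 1) w s)
    (bound := tricomiIntegrand a (b + 1) (z / 2)) (Ioi_mem_nhds (half_lt_self hz))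
    (.of_forall fun w ↦ (measurable_tricomiIntegrand a b w).aestronglyMeasurable) hint
    (hint.sub hint').aestronglyMeasurable ?_
    (integrableOn_tricomiIntegrand ha (half_pos hz) (b + 1)) ?_).2
  · rw [integral_sub hint hint'] at hderiv
    exact (hderiv.const_mul (1 / Real.Gamma a)).congr_deriv (mul_sub _ _ _)
  · refine ae_restrict_of_forall_mem measurableSet_Ioi fun s (hs : 0 < s) w (hw : z / 2 < w) ↦ ?_
    rw [tricomiIntegrand_add_one hs, tricomiIntegrand_add_one hs,
      show ∀ t : ℝ, t - (1 + s) * t = -(s * t) by intro t; ring, norm_neg]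
    unfold tricomiIntegrand
    rw [norm_of_nonneg (by positivity)]
    gcongr
    linarith
  · refine ae_restrict_of_forall_mem measurableSet_Ioi fun s (hs : 0 < s) w _ ↦ ?_
    rw [tricomiIntegrand_add_one hs]
    unfold tricomiIntegrand
    refine (((((hasDerivAt_id w).neg).mul_const s).exp.mul_const _).mul_const _).congr_deriv ?_
    simp only [Pi.neg_apply, id]
    ring

lemma hasDerivAt_exp_neg_mul_tricomiU (ha : 0 < a) (hz : 0 < z) (b : ℝ) :
    HasDerivAt (fun w ↦ exp (-w) * tricomiU a b w) (-(exp (-z) * tricomiU a (b + 1) z)) z := by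
  refine ((hasDerivAt_neg z).exp.mul (hasDerivAt_tricomiU ha hz b)).congr_deriv ?_
  ring

lemma hasDerivAt_tricomiIntegrand {s : ℝ} (hs : 0 < s) :
    HasDerivAt (tricomiIntegrand (a + 1) (b + 1) z)
      ((z + b - 1) * tricomiIntegrand a b z s - z * tricomiIntegrand a (b + 1) z s -
        (b - a - 1) * tricomiIntegrand a (b - 1) z s) s := by
  have hs1 : 0 < 1 + s := by positivity
  have hpow : s ^ a = s ^ (a - 1) * s := by rw [← rpow_add_one hs.ne', sub_add_cancel]
  have hpow' : (1 + s) ^ (b - a - 1) = (1 + s) ^ (b - a - 2) * (1 + s) := by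
    rw [← rpow_add_one hs1.ne']; ring_nf
  have hfun : tricomiIntegrand (a + 1) (b + 1) z =
      fun t ↦ exp (-z * t) * t ^ a * (1 + t) ^ (b - a - 1) := by
    funext t
    simp [tricomiIntegrand]
  have hb := tricomiIntegrand_add_one (a := a) (b := b - 1) (z := z) hs
  rw [sub_add_cancel] at hb
  rw [tricomiIntegrand_add_one hs, hb, hfun]
  refine ((((hasDerivAt_id s).const_mul (-z)).exp.mul
    (hasDerivAt_rpow_const (p := a) (.inl hs.ne'))).mul
    (((hasDerivAt_id s).const_add 1).rpow_const (p := b - a - 1) (.inl hs1.ne'))).congr_deriv ?_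
  simp only [tricomiIntegrand, id, Pi.mul_apply, hpow, hpow',
    show b - a - 1 - 1 = b - a - 2 by ring, show b - 1 - a - 1 = b - a - 2 by ring]
  ring

theorem tricomiU_contiguous (ha : 0 < a) (hz : 0 < z) (b : ℝ) :
    z * tricomiU a (b + 1) z = (z + b - 1) * tricomiU a b z -
      (b - a - 1) * tricomiU a (b - 1) z := by
  have hint (b : ℝ) := integrableOn_tricomiIntegrand ha hz b
  have hint_sub : IntegrableOn (fun s ↦ (z + b - 1) * tricomiIntegrand a b z s -
      z * tricomiIntegrand a (b + 1) z s) (Ioi 0) :=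
    ((hint b).const_mul _).sub ((hint (b + 1)).const_mul _)
  have hint' : IntegrableOn (fun s ↦ (z + b - 1) * tricomiIntegrand a b z s -
      z * tricomiIntegrand a (b + 1) z s - (b - a - 1) * tricomiIntegrand a (b - 1) z s) (Ioi 0) :=
    hint_sub.sub ((hint (b - 1)).const_mul _)
  have hderiv : ∀ s ∈ Ioi (0 : ℝ), HasDerivAt (tricomiIntegrand (a + 1) (b + 1) z) _ s :=
    fun s hs ↦ hasDerivAt_tricomiIntegrand hs
  have hcont : ContinuousWithinAt (tricomiIntegrand (a + 1) (b + 1) z) (Ici 0) 0 := by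
    refine ContinuousAt.continuousWithinAt (.mul (.mul (by fun_prop) ?_) (.rpow_const ?_ ?_))
    · exact continuousAt_rpow_const _ _ (.inr (by linarith))
    · fun_prop
    · norm_num
  have hzero : tricomiIntegrand (a + 1) (b + 1) z 0 = 0 := by
    simp [tricomiIntegrand, zero_rpow ha.ne']
  have key := integral_Ioi_of_hasDerivAt_of_tendsto hcont hderiv hint'
    (tendsto_zero_of_hasDerivAt_of_integrableOn_Ioi hderiv hint'
      (integrableOn_tricomiIntegrand (by linarith) hz _))
  rw [integral_sub hint_sub ((hint (b - 1)).const_mul _),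
    integral_sub ((hint b).const_mul _) ((hint (b + 1)).const_mul _), integral_const_mul,
    integral_const_mul, integral_const_mul, hzero, sub_zero] at key
  unfold tricomiIntegrand at key
  unfold tricomiU
  linear_combination -(1 / Real.Gamma a) * key

end Tricomi

section Beta

/-- The kernel on `(0, ∞)²` behind the beta integral `∫ s ^ (a - 1) (1 + s) ^ (-p)`: its integral
in `t` is `Γ(p)` times that integrand, and its integral in `s` is a Gamma integrand. -/
def betaKernel (a p t s : ℝ) : ℝ := t ^ (p - 1) * exp (-t) * (s ^ (a - 1) * exp (-(t * s)))

variable {a p : ℝ}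

lemma integral_betaKernel_left {t : ℝ} (ha : 0 < a) (ht : 0 < t) :
    ∫ s in Ioi 0, betaKernel a p t s = Real.Gamma a * (exp (-t) * t ^ (p - a - 1)) := by
  unfold betaKernel
  rw [integral_const_mul, Real.integral_rpow_mul_exp_neg_mul_Ioi ha ht, one_div, inv_rpow ht.le,
    ← rpow_neg ht.le, show p - a - 1 = p - 1 + -a by ring, rpow_add ht]
  ring

lemma integral_betaKernel_right {s : ℝ} (hp : 0 < p) (hs : 0 < s) :
    ∫ t in Ioi 0, betaKernel a p t s = Real.Gamma p * (s ^ (a - 1) * (1 + s) ^ (-p)) := by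
  have hs1 : 0 < 1 + s := by positivity
  have hkernel (t : ℝ) : betaKernel a p t s =
      s ^ (a - 1) * (t ^ (p - 1) * exp (-((1 + s) * t))) := by
    rw [betaKernel, show -((1 + s) * t) = -t + -(t * s) by ring, exp_add]
    ring
  simp only [hkernel]
  rw [integral_const_mul, Real.integral_rpow_mul_exp_neg_mul_Ioi hp hs1, one_div,
    inv_rpow hs1.le, ← rpow_neg hs1.le]
  ring

lemma integrable_betaKernel (ha : 0 < a) (hap : a < p) :
    Integrable (Function.uncurry (betaKernel a p))
      ((volume.restrict (Ioi 0)).prod (volume.restrict (Ioi 0))) := by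
  have hmeas : Measurable (Function.uncurry (betaKernel a p)) := by
    unfold Function.uncurry betaKernel
    fun_prop
  refine (integrable_prod_iff hmeas.aestronglyMeasurable).2 ⟨?_, ?_⟩
  · refine ae_restrict_of_forall_mem measurableSet_Ioi fun t (ht : 0 < t) ↦ ?_
    exact (integrableOn_rpow_mul_exp_neg_mul ha ht).integrable.const_mul (t ^ (p - 1) * exp (-t))
  · refine ((Real.GammaIntegral_convergent (sub_pos.2 hap)).const_mul (Real.Gamma a)).congr
      (ae_restrict_of_forall_mem measurableSet_Ioi fun t (ht : 0 < t) ↦ ?_)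
    dsimp only
    rw [← integral_betaKernel_left ha ht]
    refine setIntegral_congr_fun measurableSet_Ioi fun s (hs : 0 < s) ↦ ?_
    simp only [Function.uncurry_apply_pair]
    rw [betaKernel, norm_of_nonneg (by positivity)]

theorem integral_rpow_mul_one_add_rpow_neg (ha : 0 < a) (hap : a < p) :
    ∫ s in Ioi (0 : ℝ), s ^ (a - 1) * (1 + s) ^ (-p) =
      Real.Gamma a * Real.Gamma (p - a) / Real.Gamma p := by
  have hp : 0 < p := ha.trans hap
  have hΓ := Real.Gamma_pos_of_pos hp
  have hswap := integral_integral_swap (integrable_betaKernel ha hap)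
  rw [setIntegral_congr_fun measurableSet_Ioi fun t ht ↦ integral_betaKernel_left ha ht,
    setIntegral_congr_fun measurableSet_Ioi fun s hs ↦ integral_betaKernel_right hp hs,
    integral_const_mul, integral_const_mul, ← Real.Gamma_eq_integral (sub_pos.2 hap)] at hswap
  rw [eq_div_iff hΓ.ne', hswap, mul_comm]

lemma integrableOn_rpow_mul_one_add_rpow_neg (ha : 0 < a) (hap : a < p) :
    IntegrableOn (fun s : ℝ ↦ s ^ (a - 1) * (1 + s) ^ (-p)) (Ioi 0) := by
  refine Integrable.of_integral_ne_zero ?_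
  rw [integral_rpow_mul_one_add_rpow_neg ha hap]
  have := Real.Gamma_pos_of_pos ha
  have := Real.Gamma_pos_of_pos (sub_pos.2 hap)
  have := Real.Gamma_pos_of_pos (ha.trans hap)
  positivity

end Beta

section TricomiLimits

variable {a b : ℝ}

theorem tendsto_tricomiU_zero_of_lt_one (ha : 0 < a) (hb : b < 1) :
    Tendsto (tricomiU a b) (𝓝[>] 0) (𝓝 (Real.Gamma (1 - b) / Real.Gamma (a - b + 1))) := by
  have hap : a < a - b + 1 := by linarith
  have hlim : Tendsto (fun z ↦ ∫ s in Ioi 0, tricomiIntegrand a b z s) (𝓝[>] 0)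
      (𝓝 (∫ s in Ioi 0, s ^ (a - 1) * (1 + s) ^ (-(a - b + 1)))) := by
    refine tendsto_integral_filter_of_dominated_convergence _
      (.of_forall fun z ↦ (measurable_tricomiIntegrand a b z).aestronglyMeasurable) ?_
      (integrableOn_rpow_mul_one_add_rpow_neg ha hap) ?_
    · filter_upwards [self_mem_nhdsWithin] with z (hz : 0 < z)
      refine ae_restrict_of_forall_mem measurableSet_Ioi fun s (hs : 0 < s) ↦ ?_
      rw [tricomiIntegrand, norm_of_nonneg (by positivity), mul_assoc,
        show -(a - b + 1) = b - a - 1 by ring]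
      refine mul_le_of_le_one_left (by positivity) (exp_le_one_iff.2 ?_)
      nlinarith
    · refine .of_forall fun s ↦ tendsto_nhdsWithin_of_tendsto_nhds ?_
      have hcont : Continuous fun z ↦ tricomiIntegrand a b z s := by
        unfold tricomiIntegrand
        fun_prop
      convert hcont.tendsto 0 using 2
      simp [tricomiIntegrand, show -1 + (b - a) = b - a - 1 by ring]
  rw [integral_rpow_mul_one_add_rpow_neg ha hap] at hlim
  have hvalue : 1 / Real.Gamma a *
      (Real.Gamma a * Real.Gamma (a - b + 1 - a) / Real.Gamma (a - b + 1)) =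
      Real.Gamma (1 - b) / Real.Gamma (a - b + 1) := by
    rw [show a - b + 1 - a = 1 - b by ring]
    field_simp
  exact hvalue ▸ hlim.const_mul (1 / Real.Gamma a)

lemma rpow_mul_integral_tricomiIntegrand {z : ℝ} (hz : 0 < z) :
    z ^ (b - 1) * ∫ s in Ioi 0, tricomiIntegrand a b z s =
      ∫ t in Ioi 0, exp (-t) * t ^ (a - 1) * (z + t) ^ (b - a - 1) := by
  have hscale := integral_comp_mul_left_Ioi
    (fun t ↦ exp (-t) * t ^ (a - 1) * (z + t) ^ (b - a - 1)) 0 hz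
  rw [mul_zero, smul_eq_mul, eq_inv_mul_iff_mul_eq₀ hz.ne'] at hscale
  rw [← hscale, ← integral_const_mul, ← integral_const_mul]
  refine setIntegral_congr_fun measurableSet_Ioi fun s (hs : 0 < s) ↦ ?_
  rw [tricomiIntegrand, show z + z * s = z * (1 + s) by ring, mul_rpow hz.le hs.le,
    mul_rpow hz.le (by positivity), show b - 1 = 1 + (a - 1) + (b - a - 1) by ring,
    rpow_add hz, rpow_add hz, rpow_one]
  ring_nf

lemma add_rpow_le_rpow_add_one_add_rpow {z t : ℝ} (hz : 0 < z) (hz1 : z ≤ 1) (ht : 0 < t)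
    (c : ℝ) :
    (z + t) ^ c ≤ t ^ c + (1 + t) ^ c := by
  rcases le_total 0 c with hc | hc
  · refine le_add_of_nonneg_of_le (by positivity) ?_
    gcongr
  · exact le_add_of_le_of_nonneg (rpow_le_rpow_of_nonpos ht (by linarith) hc) (by positivity)

theorem tendsto_rpow_mul_tricomiU_of_one_lt (ha : 0 < a) (hb : 1 < b) :
    Tendsto (fun z ↦ z ^ (b - 1) * tricomiU a b z) (𝓝[>] 0)
      (𝓝 (Real.Gamma (b - 1) / Real.Gamma a)) := by
  have hb0 : 0 < b - 1 := sub_pos.2 hb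
  have hpow {t : ℝ} (ht : 0 < t) :
      exp (-t) * t ^ (a - 1) * t ^ (b - a - 1) = exp (-t) * t ^ (b - 1 - 1) := by
    rw [mul_assoc, ← rpow_add ht, show a - 1 + (b - a - 1) = b - 1 - 1 by ring]
  have hlim : Tendsto (fun z ↦ ∫ t in Ioi 0, exp (-t) * t ^ (a - 1) * (z + t) ^ (b - a - 1))
      (𝓝[>] 0) (𝓝 (∫ t in Ioi 0, exp (-t) * t ^ (b - 1 - 1))) := by
    refine tendsto_integral_filter_of_dominated_convergence
      (fun t ↦ exp (-t) * t ^ (b - 1 - 1) + tricomiIntegrand a b 1 t)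
      (.of_forall fun z ↦ Measurable.aestronglyMeasurable (by fun_prop)) ?_
      ((Real.GammaIntegral_convergent hb0).add (integrableOn_tricomiIntegrand ha one_pos b)) ?_
    · filter_upwards [Ioo_mem_nhdsGT one_pos] with z hz
      refine ae_restrict_of_forall_mem measurableSet_Ioi fun t (ht : 0 < t) ↦ ?_
      have hz0 := hz.1
      rw [norm_of_nonneg (by positivity), ← hpow ht, tricomiIntegrand, neg_one_mul, ← mul_add]
      gcongr
      exact add_rpow_le_rpow_add_one_add_rpow hz.1 hz.2.le ht _
    · refine ae_restrict_of_forall_mem measurableSet_Ioi fun t (ht : 0 < t) ↦ ?_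
      refine tendsto_nhdsWithin_of_tendsto_nhds ?_
      have hcont : ContinuousAt (fun z ↦ exp (-t) * t ^ (a - 1) * (z + t) ^ (b - a - 1)) 0 :=
        continuousAt_const.mul (.rpow_const (by fun_prop) (.inl (by simpa using ht.ne')))
      have h := hcont.tendsto
      rwa [zero_add, hpow ht] at h
  rw [← Real.Gamma_eq_integral hb0] at hlim
  rw [div_eq_inv_mul]
  refine (hlim.const_mul (Real.Gamma a)⁻¹).congr' ?_
  filter_upwards [self_mem_nhdsWithin] with z hz
  rw [← rpow_mul_integral_tricomiIntegrand hz, mul_left_comm, ← one_div]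
  rfl

end TricomiLimits

section PlanarSystem

/-- The vector field of the planar linear system `x' = y - (4/9) t² x`, `y' = -(2/9) t x`, which is
`x'' + (4/9) t² x' + (10/9) t x = 0` written in the variables `x` and `y = x' + (4/9) t² x`. -/
def mittagLefflerField (t : ℝ) (p : ℝ × ℝ) : ℝ × ℝ :=
  (p.2 - 4 / 9 * t ^ 2 * p.1, -(2 / 9) * t * p.1)

lemma lipschitzWith_mittagLefflerField {t b : ℝ} (ht : t ∈ Ioc 0 b) :
    LipschitzWith (1 + 4 / 9 * b ^ 2 + 2 / 9 * b).toNNReal (mittagLefflerField t) := by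
  refine LipschitzWith.of_dist_le' fun p q ↦ ?_
  have h1 : |p.1 - q.1| ≤ dist p q := le_max_left _ _
  have h2 : |p.2 - q.2| ≤ dist p q := le_max_right _ _
  have ht0 : 0 < t := ht.1
  have hb0 : 0 < b := ht0.trans_le ht.2
  have htb : t ^ 2 ≤ b ^ 2 := by gcongr; exact ht.2
  rw [Prod.dist_eq, Real.dist_eq, Real.dist_eq]
  refine max_le ?_ ?_
  · calc |p.2 - 4 / 9 * t ^ 2 * p.1 - (q.2 - 4 / 9 * t ^ 2 * q.1)|
        = |(p.2 - q.2) - 4 / 9 * t ^ 2 * (p.1 - q.1)| := by ring_nf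
      _ ≤ |p.2 - q.2| + |4 / 9 * t ^ 2 * (p.1 - q.1)| := abs_sub _ _
      _ = |p.2 - q.2| + 4 / 9 * t ^ 2 * |p.1 - q.1| := by
        rw [abs_mul, abs_of_nonneg (by positivity : 0 ≤ 4 / 9 * t ^ 2)]
      _ ≤ dist p q + 4 / 9 * b ^ 2 * dist p q + 2 / 9 * b * dist p q := by
        refine le_add_of_le_of_nonneg ?_ (by positivity)
        gcongr
      _ = (1 + 4 / 9 * b ^ 2 + 2 / 9 * b) * dist p q := by ring
  · calc |-(2 / 9) * t * p.1 - -(2 / 9) * t * q.1|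
        = |2 / 9 * t * (p.1 - q.1)| := by rw [← abs_neg]; ring_nf
      _ = 2 / 9 * t * |p.1 - q.1| := by
        rw [abs_mul, abs_of_pos (by positivity : 0 < 2 / 9 * t)]
      _ ≤ 2 / 9 * b * dist p q := by
        gcongr
        exact ht.2
      _ ≤ (1 + 4 / 9 * b ^ 2 + 2 / 9 * b) * dist p q := by
        gcongr
        exact le_add_of_nonneg_left (by positivity)

/-- The curve `(x, x' + (4/9) t² x)` for `x = mittagLeffler23`. -/
def mittagLefflerCurve (t : ℝ) : ℝ × ℝ :=
  (mittagLeffler23 t, deriv mittagLeffler23 t + 4 / 9 * t ^ 2 * mittagLeffler23 t)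

theorem hasDerivAt_mittagLefflerCurve (t : ℝ) :
    HasDerivAt mittagLefflerCurve (mittagLefflerField t (mittagLefflerCurve t)) t := by
  have hf := (hasDerivAt_mittagLeffler23 t).differentiableAt.hasDerivAt
  have hy := (hasDerivAt_deriv_mittagLeffler23 t).add
    (((hasDerivAt_pow 2 t).const_mul (4 / 9)).mul hf)
  refine (hf.prodMk hy).congr_deriv ?_
  ext <;> simp only [mittagLefflerField, mittagLefflerCurve] <;> push_cast <;> ring

/-- The curve `(x, x' + (4/9) t² x)` for the closed form `x`, with the second component already
expressed through `U(1/6, 1/3; ·)`. -/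
def tricomiCurve (t : ℝ) : ℝ × ℝ :=
  (2 ^ ((1 : ℝ) / 3) / √(3 * π) * t * (exp (-4 * t ^ 3 / 27) *
      tricomiU (1 / 6) (4 / 3) (4 * t ^ 3 / 27)),
    2 ^ ((1 : ℝ) / 3) / √(3 * π) / 2 * (exp (-4 * t ^ 3 / 27) *
      tricomiU (1 / 6) (1 / 3) (4 * t ^ 3 / 27)))

lemma hasDerivAt_exp_mul_tricomiU_cube {a t : ℝ} (ha : 0 < a) (ht : 0 < t) (b : ℝ) :
    HasDerivAt (fun t ↦ exp (-4 * t ^ 3 / 27) * tricomiU a b (4 * t ^ 3 / 27))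
      (-(4 / 9 * t ^ 2) * (exp (-4 * t ^ 3 / 27) * tricomiU a (b + 1) (4 * t ^ 3 / 27))) t := by
  have hcube : HasDerivAt (fun t : ℝ ↦ 4 * t ^ 3 / 27) (4 / 9 * t ^ 2) t := by
    refine (((hasDerivAt_pow 3 t).const_mul 4).div_const 27).congr_deriv ?_
    push_cast; ring
  have hexp (t : ℝ) : -4 * t ^ 3 / 27 = -(4 * t ^ 3 / 27) := by ring
  simp only [hexp]
  refine ((hasDerivAt_exp_neg_mul_tricomiU ha (by positivity) b).comp t hcube).congr_deriv ?_
  ring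

theorem hasDerivAt_tricomiCurve {t : ℝ} (ht : 0 < t) :
    HasDerivAt tricomiCurve (mittagLefflerField t (tricomiCurve t)) t := by
  have ha : (0 : ℝ) < 1 / 6 := by norm_num
  have hx := ((hasDerivAt_id t).const_mul (2 ^ ((1 : ℝ) / 3) / √(3 * π))).mul
    (hasDerivAt_exp_mul_tricomiU_cube ha ht (4 / 3))
  have hy := (hasDerivAt_exp_mul_tricomiU_cube ha ht (1 / 3)).const_mul
    (2 ^ ((1 : ℝ) / 3) / √(3 * π) / 2)
  have hrel := tricomiU_contiguous ha (by positivity : 0 < 4 * t ^ 3 / 27) (4 / 3)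
  rw [show (4 / 3 : ℝ) - 1 = 1 / 3 by norm_num] at hrel
  rw [show (1 / 3 : ℝ) + 1 = 4 / 3 by norm_num] at hy
  refine (hx.prodMk hy).congr_deriv (Prod.ext ?_ ?_)
  · simp only [mittagLefflerField, tricomiCurve, id]
    linear_combination
      (-3 * (2 ^ ((1 : ℝ) / 3) / √(3 * π)) * exp (-4 * t ^ 3 / 27)) * hrel
  · simp only [mittagLefflerField, tricomiCurve]
    ring

lemma tendsto_mittagLefflerCurve :
    Tendsto mittagLefflerCurve (𝓝[>] 0)
      (𝓝 (√3 / (2 * π) * Real.Gamma (2 / 3), √3 / (6 * π) * Real.Gamma (1 / 3))) := by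
  have h := (hasDerivAt_mittagLefflerCurve 0).continuousAt.tendsto
  rw [mittagLefflerCurve] at h
  simp only [mittagLeffler23_zero, deriv_mittagLeffler23_zero] at h
  exact tendsto_nhdsWithin_of_tendsto_nhds (by simpa using h)

lemma tendsto_four_mul_cube_div : Tendsto (fun t : ℝ ↦ 4 * t ^ 3 / 27) (𝓝[>] 0) (𝓝[>] 0) := by
  refine tendsto_nhdsWithin_iff.2 ⟨tendsto_nhdsWithin_of_tendsto_nhds ?_, ?_⟩
  · simpa using (by fun_prop : Continuous fun t : ℝ ↦ 4 * t ^ 3 / 27).tendsto 0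
  · filter_upwards [self_mem_nhdsWithin] with t (ht : 0 < t)
    rw [mem_Ioi]
    positivity

lemma two_rpow_one_third_pow_three : ((2 : ℝ) ^ ((1 : ℝ) / 3)) ^ 3 = 2 := by
  rw [← rpow_natCast, ← rpow_mul zero_le_two]
  norm_num

lemma two_rpow_two_thirds : (2 : ℝ) ^ ((2 : ℝ) / 3) = (2 ^ ((1 : ℝ) / 3)) ^ 2 := by
  rw [← rpow_natCast, ← rpow_mul zero_le_two]
  norm_num

lemma four_mul_cube_div_rpow_one_third {t : ℝ} (ht : 0 ≤ t) :
    (4 * t ^ 3 / 27) ^ ((1 : ℝ) / 3) = (2 ^ ((1 : ℝ) / 3)) ^ 2 / 3 * t := by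
  have hcube : 4 * t ^ 3 / 27 = ((2 ^ ((1 : ℝ) / 3)) ^ 2 / 3 * t) ^ 3 := by
    linear_combination (-(t ^ 3 / 27) * ((2 ^ ((1 : ℝ) / 3)) ^ 3 + 2)) *
      two_rpow_one_third_pow_three
  rw [hcube, ← rpow_natCast, ← rpow_mul (by positivity)]
  norm_num

lemma tricomi_const_mul_Gamma_one_third :
    2 ^ ((1 : ℝ) / 3) / √(3 * π) * (3 / (2 ^ ((1 : ℝ) / 3)) ^ 2) *
      (Real.Gamma (1 / 3) / Real.Gamma (1 / 6)) = √3 / (2 * π) * Real.Gamma (2 / 3) := by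
  have hdup := Real.Gamma_mul_Gamma_add_half (1 / 6)
  rw [show (1 / 6 : ℝ) + 1 / 2 = 2 / 3 by norm_num, show 2 * (1 / 6 : ℝ) = 1 / 3 by norm_num,
    show (1 : ℝ) - 1 / 3 = 2 / 3 by norm_num, two_rpow_two_thirds] at hdup
  have hcube := two_rpow_one_third_pow_three
  have : 0 < Real.Gamma (1 / 6) := Real.Gamma_pos_of_pos (by norm_num)
  have hπ : √π * √π = π := mul_self_sqrt pi_pos.le
  have h3 : √3 * √3 = (3 : ℝ) := mul_self_sqrt zero_le_three
  have hc : (0 : ℝ) < 2 ^ ((1 : ℝ) / 3) := by positivity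
  rw [sqrt_mul zero_le_three]
  generalize (2 : ℝ) ^ ((1 : ℝ) / 3) = c at *
  field_simp
  linear_combination (-c * √π * Real.Gamma (1 / 6) * Real.Gamma (2 / 3)) * h3 -
    3 * c * √π * hdup - 3 * Real.Gamma (1 / 3) * √π * √π * hcube - 6 * Real.Gamma (1 / 3) * hπ

lemma tricomi_const_mul_Gamma_two_thirds :
    2 ^ ((1 : ℝ) / 3) / √(3 * π) / 2 * (Real.Gamma (2 / 3) / Real.Gamma (5 / 6)) =
      √3 / (6 * π) * Real.Gamma (1 / 3) := by
  have hdup := Real.Gamma_mul_Gamma_add_half (1 / 3)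
  rw [show (1 / 3 : ℝ) + 1 / 2 = 5 / 6 by norm_num, show 2 * (1 / 3 : ℝ) = 2 / 3 by norm_num,
    show (1 : ℝ) - 2 / 3 = 1 / 3 by norm_num] at hdup
  have : 0 < Real.Gamma (5 / 6) := Real.Gamma_pos_of_pos (by norm_num)
  have hπ : √π * √π = π := mul_self_sqrt pi_pos.le
  have h3 : √3 * √3 = (3 : ℝ) := mul_self_sqrt zero_le_three
  rw [sqrt_mul zero_le_three]
  field_simp
  linear_combination (-2 * √π * Real.Gamma (5 / 6) * Real.Gamma (1 / 3)) * h3 -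
    6 * √π * hdup - 6 * Real.Gamma (2 / 3) * 2 ^ ((1 : ℝ) / 3) * hπ

theorem tendsto_tricomiCurve :
    Tendsto tricomiCurve (𝓝[>] 0)
      (𝓝 (√3 / (2 * π) * Real.Gamma (2 / 3), √3 / (6 * π) * Real.Gamma (1 / 3))) := by
  have ha : (0 : ℝ) < 1 / 6 := by norm_num
  have hexp : Tendsto (fun t : ℝ ↦ exp (-4 * t ^ 3 / 27)) (𝓝[>] 0) (𝓝 1) :=
    tendsto_nhdsWithin_of_tendsto_nhds
      (by simpa using (by fun_prop : Continuous fun t : ℝ ↦ exp (-4 * t ^ 3 / 27)).tendsto 0)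
  have hx := hexp.mul ((tendsto_rpow_mul_tricomiU_of_one_lt ha (b := 4 / 3) (by norm_num)).comp
    tendsto_four_mul_cube_div)
  have hy := hexp.mul ((tendsto_tricomiU_zero_of_lt_one ha (b := 1 / 3) (by norm_num)).comp
    tendsto_four_mul_cube_div)
  rw [one_mul, show (4 / 3 : ℝ) - 1 = 1 / 3 by norm_num] at hx
  rw [one_mul, show (1 : ℝ) - 1 / 3 = 2 / 3 by norm_num,
    show (1 / 6 : ℝ) - 1 / 3 + 1 = 5 / 6 by norm_num] at hy
  rw [← tricomi_const_mul_Gamma_one_third, ← tricomi_const_mul_Gamma_two_thirds]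
  refine Tendsto.prodMk_nhds ?_ ?_
  · refine (hx.const_mul
      (2 ^ ((1 : ℝ) / 3) / √(3 * π) * (3 / (2 ^ ((1 : ℝ) / 3)) ^ 2))).congr' ?_
    filter_upwards [self_mem_nhdsWithin] with t (ht : 0 < t)
    rw [Function.comp_apply, four_mul_cube_div_rpow_one_third ht.le]
    field_simp
  · exact hy.const_mul _

theorem mittagLefflerCurve_eq_tricomiCurve {z : ℝ} (hz : 0 < z) :
    mittagLefflerCurve z = tricomiCurve z := by
  refine ODE_solution_unique_of_tendsto_dist hz
    (fun _ ht ↦ lipschitzWith_mittagLefflerField ht)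
    (fun t _ ↦ hasDerivAt_mittagLefflerCurve t) (fun t ht ↦ hasDerivAt_tricomiCurve ht.1) ?_
  simpa using tendsto_mittagLefflerCurve.dist tendsto_tricomiCurve

end PlanarSystem

/-- closed form of the Mittag-Leffler density of index `2/3`:
`f_{2/3}(z) = (2^{1/3}/√(3π))·z·e^{-4z³/27}·U(1/6,4/3;4z³/27)` for `z > 0`, and at
`z = 0` the formula holds by continuity. -/
theorem stmt15 :
    (∀ z : ℝ, 0 < z →
      mittagLeffler23 z =
        (2:ℝ) ^ ((1:ℝ)/3) / Real.sqrt (3 * π) * z * Real.exp (-4 * z ^ 3 / 27) *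
          tricomiU (1/6) (4/3) (4 * z ^ 3 / 27)) ∧
    Tendsto (fun z : ℝ =>
        (2:ℝ) ^ ((1:ℝ)/3) / Real.sqrt (3 * π) * z * Real.exp (-4 * z ^ 3 / 27) *
          tricomiU (1/6) (4/3) (4 * z ^ 3 / 27))
      (𝓝[>] 0) (𝓝 (mittagLeffler23 0)) := by
  have closedForm : ∀ z : ℝ, 0 < z → mittagLeffler23 z =
      2 ^ ((1 : ℝ) / 3) / √(3 * π) * z * exp (-4 * z ^ 3 / 27) *
        tricomiU (1 / 6) (4 / 3) (4 * z ^ 3 / 27) := fun z hz ↦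
    (congrArg Prod.fst (mittagLefflerCurve_eq_tricomiCurve hz)).trans (mul_assoc _ _ _).symm
  have hcont : Tendsto mittagLeffler23 (𝓝[>] 0) (𝓝 (mittagLeffler23 0)) :=
    tendsto_nhdsWithin_of_tendsto_nhds (hasDerivAt_mittagLeffler23 0).continuousAt
  exact ⟨closedForm, hcont.congr' (eventually_mem_nhdsWithin.mono closedForm)⟩
end
end
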